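/- arXiv:1909.09570 — 9 statements merged into one kernel-verified Lean document; each statement's English description precedes it below -/
import Mathlib

section
/- Let V ⊂ ℤ² be a finite set such that the convex hull P := convexHull ℝ V (viewing ℤ² ⊂ ℝ²) is two-dimensional (V affinely spans ℝ²), every point of V is an extreme point of P, and the lattice points of P are exactly the points of V, i.e. P ∩ ℤ² = V. Then there exist a matrix A ∈ GL(2,ℤ) and a translation vector t ∈ ℤ² such that the image of V under x ↦ A·x + t is either the triangle vertex set {(0,0),(1,0),(0,1)} or the unit square vertex set {(0,0),(1,0),(0,1),(1,1)}. -/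
/-- The embedding of the lattice `ℤ²` into `ℝ²`. -/
def latticeEmbed₂ (v : Fin 2 → ℤ) : Fin 2 → ℝ := fun i => (v i : ℝ)

/-!
Extremality of the vertices and the absence of further lattice points combine into one property:
no subset of `V` has a lattice point in its convex hull other than its own elements.

Let `a, b, c ∈ V` be affinely independent. Translating by integer multiples of `b - a` and `c - a`
moves every lattice point into the parallelogram on `a, b, c`, and the point reflection
`y ↦ b + c - y` exchanges its two triangles, so it contains no lattice points beyond its vertices.
Hence every lattice point is an *integral* affine combination of `a, b, c`, i.e. some element of
`GL(2,ℤ)` followed by a translation carries them to the standard triangle.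

If `x = p a + q b + r c` with `p + q + r = 1` is any point of `V`, then two of the integers
`p, q, r` are nonpositive or two of them are positive. If `q, r ≤ 0`, then `a` is in the hull of
`x, b, c`, so `x = a`. If `q, r > 0`, then `b + c - a` is in the hull of `x, b, c`, so
`x = b + c - a`. No two of the points `b + c - a`, `c + a - b`, `a + b - c` occur together, because
their midpoint is one of `a, b, c`.
-/

open Module (finrank)
open scoped Matrix

section AffineSpan

variable {k E P : Type*} [AddCommGroup E]

theorem mem_affineSpan_insert_iff_vsub_mem_span [Ring k] [Module k E] [AddTorsor E P]
    {p x : P} {s : Set P} :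
    x ∈ affineSpan k (insert p s) ↔ x -ᵥ p ∈ Submodule.span k ((· -ᵥ p) '' s) := by
  have hp : p ∈ affineSpan k (insert p s) := mem_affineSpan k (Set.mem_insert p s)
  rw [← AffineSubspace.vsub_right_mem_direction_iff_mem hp, direction_affineSpan,
    vectorSpan_eq_span_vsub_set_right k (Set.mem_insert p s), Set.image_insert_eq, vsub_self,
    Submodule.span_insert_zero]

theorem mem_affineSpan_triple_iff [Ring k] [Module k E] {a b c x : E} :
    x ∈ affineSpan k {a, b, c} ↔ ∃ p q : k, p • (b - a) + q • (c - a) = x - a := by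
  simp [mem_affineSpan_insert_iff_vsub_mem_span, Set.image_pair, Submodule.mem_span_pair]

theorem exists_subset_ncard_eq_finrank_add_one_affineSpan_eq_top [DivisionRing k] [Module k E]
    [AddTorsor E P] [FiniteDimensional k E] {s : Set P} (hs : affineSpan k s = ⊤) :
    ∃ t ⊆ s, t.ncard = finrank k E + 1 ∧ affineSpan k t = ⊤ := by
  obtain ⟨t, hts, hspan, hind⟩ := exists_affineIndependent k E s
  have := (finite_set_of_fin_dim_affineIndependent k hind).fintype
  have htop : affineSpan k t = ⊤ := hspan.trans hs
  refine ⟨t, hts, ?_, htop⟩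
  rw [← Nat.card_coe_set_eq, Nat.card_eq_fintype_card]
  exact hind.affineSpan_eq_top_iff_card_eq_finrank_add_one.1 (by rwa [Subtype.range_coe])

end AffineSpan

section GeneralLinearGroup

variable {n R : Type*} [Fintype n] [DecidableEq n] [CommRing R]

theorem exists_GL_mulVec_eq_single {v : n → n → R} (hv : Submodule.span R (Set.range v) = ⊤) :
    ∃ A : GL n R, ∀ i, (A : Matrix n n R) *ᵥ v i = Pi.single i 1 := by
  let M : Matrix n n R := (Matrix.of v)ᵀ
  have hsurj : Function.Surjective M.mulVec :=
    LinearMap.range_eq_top.1 (M.range_mulVecLin.trans hv)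
  obtain ⟨B, hB⟩ := Matrix.mulVec_surjective_iff_isUnit.1 hsurj
  refine ⟨B⁻¹, fun i => ?_⟩
  have hcol : v i = (B : Matrix n n R) *ᵥ Pi.single i 1 := by
    rw [hB, Matrix.mulVec_single_one]
    rfl
  rw [hcol, Matrix.mulVec_mulVec, ← Units.val_mul, inv_mul_cancel, Units.val_one,
    Matrix.one_mulVec]

theorem exists_GL_mulVec_add_eq_single {p₀ : n → R} {p : n → n → R}
    (hp : affineSpan R (insert p₀ (Set.range p)) = ⊤) :
    ∃ (A : GL n R) (t : n → R), (A : Matrix n n R) *ᵥ p₀ + t = 0 ∧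
      ∀ i, (A : Matrix n n R) *ᵥ p i + t = Pi.single i 1 := by
  have hspan : Submodule.span R (Set.range fun i => p i - p₀) = ⊤ := by
    refine eq_top_iff.2 fun y _ => ?_
    have hy : y + p₀ ∈ affineSpan R (insert p₀ (Set.range p)) := hp ▸ AffineSubspace.mem_top ..
    rwa [mem_affineSpan_insert_iff_vsub_mem_span, vsub_eq_sub, add_sub_cancel_right,
      ← Set.range_comp] at hy
  obtain ⟨A, hA⟩ := exists_GL_mulVec_eq_single hspan
  refine ⟨A, -((A : Matrix n n R) *ᵥ p₀), add_neg_cancel _, fun i => ?_⟩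
  rw [← hA i, Matrix.mulVec_sub, sub_eq_add_neg]

end GeneralLinearGroup

/-- `V` is the vertex set of an empty lattice polytope, that is, of one whose only lattice points
are its vertices; the lattice `L` sits in the real vector space `E` through `φ`. Quantifying over
all subsets `S` of `V` encodes at once that the elements of `V` are vertices and that no other
lattice point lies in their convex hull. -/
def IsEmptyVertexSet {L E : Type*} [AddCommGroup E] [Module ℝ E] (φ : L → E) (V : Set L) : Prop :=
  ∀ S ⊆ V, ∀ x, φ x ∈ convexHull ℝ (φ '' S) → x ∈ S

theorem isEmptyVertexSet_of_extremePoints {L E : Type*} [AddCommGroup E] [Module ℝ E]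
    {φ : L → E} {V : Set L} (hφ : Function.Injective φ)
    (hext : ∀ v ∈ V, φ v ∈ (convexHull ℝ (φ '' V)).extremePoints ℝ)
    (hlat : ∀ x, φ x ∈ convexHull ℝ (φ '' V) → x ∈ V) : IsEmptyVertexSet φ V := by
  intro S hS x hx
  have hind : ConvexIndependent ℝ ((↑) : φ '' V → E) :=
    (convex_convexHull ℝ _).convexIndependent_extremePoints.mono (Set.image_subset_iff.2 hext)
  have hSV : φ '' S ⊆ φ '' V := Set.image_mono hS
  have hxV : x ∈ V := hlat x (convexHull_mono hSV hx)
  exact hφ.mem_set_image.1 <| convexIndependent_set_iff_inter_convexHull_subset.1 hind _ hSV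
    ⟨Set.mem_image_of_mem φ hxV, hx⟩

namespace IsEmptyVertexSet

variable {L E : Type*} [AddCommGroup L] [AddCommGroup E] [Module ℝ E] {φ : L →+ E} {V : Set L}
  {a b c x : L}

theorem mem_triple_of_eq_convexCombination (hV : IsEmptyVertexSet φ V)
    (ha : a ∈ V) (hb : b ∈ V) (hc : c ∈ V) {α β γ : ℝ} (hα : 0 ≤ α) (hβ : 0 ≤ β) (hγ : 0 ≤ γ)
    (hsum : α + β + γ = 1) (hx : φ x = α • φ a + β • φ b + γ • φ c) :
    x ∈ ({a, b, c} : Set L) := by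
  refine hV {a, b, c} (by simp [Set.insert_subset_iff, *]) x ?_
  have hmem : ∀ i, ![φ a, φ b, φ c] i ∈ convexHull ℝ (φ '' {a, b, c}) := fun i =>
    subset_convexHull ℝ _ (by fin_cases i <;> simp)
  have hcomb := (convex_convexHull ℝ (φ '' {a, b, c})).sum_mem (t := Finset.univ)
    (w := ![α, β, γ]) (by simp [Fin.forall_fin_succ, *])
    (by simp [Fin.sum_univ_three, hsum]) fun i _ => hmem i
  simpa [Fin.sum_univ_three, hx] using hcomb

theorem mem_triple_of_zsmul_eq (hV : IsEmptyVertexSet φ V)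
    (ha : a ∈ V) (hb : b ∈ V) (hc : c ∈ V) {α β γ : ℤ} (hα : 0 ≤ α) (hβ : 0 ≤ β) (hγ : 0 ≤ γ)
    (hpos : 0 < α + β + γ) (hx : (α + β + γ) • x = α • a + β • b + γ • c) :
    x ∈ ({a, b, c} : Set L) := by
  set m : ℤ := α + β + γ with hm
  have hm₀ : (0 : ℝ) < m := mod_cast hpos
  have hdiv : ∀ {k : ℤ}, 0 ≤ k → (0 : ℝ) ≤ k / m := fun hk => by positivity
  refine hV.mem_triple_of_eq_convexCombination ha hb hc (hdiv hα) (hdiv hβ) (hdiv hγ) ?_ ?_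
  · rw [← add_div, ← add_div, div_eq_one_iff_eq hm₀.ne', hm]
    push_cast
    rfl
  · have hφ : (m : ℝ) • φ x = (α : ℝ) • φ a + (β : ℝ) • φ b + (γ : ℝ) • φ c := by
      simpa only [map_add, map_zsmul, ← Int.cast_smul_eq_zsmul ℝ] using congrArg φ hx
    rw [eq_comm, ← inv_smul_eq_iff₀ hm₀.ne'] at hφ
    rw [← hφ]
    module

theorem mem_parallelogram (hV : IsEmptyVertexSet φ V) (ha : a ∈ V) (hb : b ∈ V) (hc : c ∈ V)
    {α β : ℝ} (hα₀ : 0 ≤ α) (hα₁ : α ≤ 1) (hβ₀ : 0 ≤ β) (hβ₁ : β ≤ 1)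
    (hx : φ x = φ a + α • (φ b - φ a) + β • (φ c - φ a)) :
    x ∈ ({a, b, c, b + c - a} : Set L) := by
  rcases le_total (α + β) 1 with h | h
  · have hmem : x ∈ ({a, b, c} : Set L) :=
      hV.mem_triple_of_eq_convexCombination (α := 1 - α - β) ha hb hc (by linarith) hα₀ hβ₀
        (by ring) (by rw [hx]; module)
    rcases hmem with rfl | rfl | rfl <;> simp
  · have hmem : b + c - x ∈ ({a, b, c} : Set L) :=
      hV.mem_triple_of_eq_convexCombination (α := α + β - 1) (β := 1 - α) (γ := 1 - β) ha hb hc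
        (by linarith) (by linarith) (by linarith) (by ring)
        (by rw [map_sub, map_add, hx]; module)
    have hswap : x = b + c - (b + c - x) := by abel
    rcases hmem with h | h | h <;> rw [h] at hswap <;> simp [hswap]

/-- Special to triangles: empty lattice tetrahedra can have arbitrarily large volume. -/
theorem mem_affineSpan_int_of_mem_affineSpan_real (hV : IsEmptyVertexSet φ V)
    (ha : a ∈ V) (hb : b ∈ V) (hc : c ∈ V) (hx : φ x ∈ affineSpan ℝ {φ a, φ b, φ c}) :
    x ∈ affineSpan ℤ {a, b, c} := by
  obtain ⟨α, β, hαβ⟩ := mem_affineSpan_triple_iff.1 hx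
  let y : L := x - ⌊α⌋ • (b - a) - ⌊β⌋ • (c - a)
  have hy : y ∈ ({a, b, c, b + c - a} : Set L) := by
    refine hV.mem_parallelogram ha hb hc (Int.fract_nonneg α) (Int.fract_lt_one α).le
      (Int.fract_nonneg β) (Int.fract_lt_one β).le ?_
    simp only [y, map_sub, map_zsmul, ← Int.cast_smul_eq_zsmul ℝ, Int.fract]
    linear_combination (norm := module) (-1 : ℝ) • hαβ
  have hspan : y ∈ affineSpan ℤ {a, b, c} := by
    rw [mem_affineSpan_triple_iff]
    rcases hy with h | h | h | h <;> rw [h]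
    exacts [⟨0, 0, by module⟩, ⟨1, 0, by module⟩, ⟨0, 1, by module⟩, ⟨1, 1, by module⟩]
  obtain ⟨p, q, hpq⟩ := mem_affineSpan_triple_iff.1 hspan
  refine mem_affineSpan_triple_iff.2 ⟨p + ⌊α⌋, q + ⌊β⌋, ?_⟩
  linear_combination (norm := module) (1 : ℤ) • hpq

theorem eq_of_nonpos_of_nonpos (hV : IsEmptyVertexSet φ V)
    (hb : b ∈ V) (hc : c ∈ V) (hx : x ∈ V) (hab : a ≠ b) (hac : a ≠ c) {p q r : ℤ}
    (hq : q ≤ 0) (hr : r ≤ 0) (hsum : p + q + r = 1) (h : x = p • a + q • b + r • c) : x = a := by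
  obtain rfl : p = 1 - q - r := by linarith
  have hmem : a ∈ ({x, b, c} : Set L) :=
    hV.mem_triple_of_zsmul_eq (α := 1) (β := -q) (γ := -r) hx hb hc one_pos.le
      (by linarith) (by linarith) (by linarith) (by rw [h]; module)
  simpa [hab, hac, eq_comm] using hmem

theorem eq_add_sub_of_pos_of_pos (hV : IsEmptyVertexSet φ V)
    (hb : b ∈ V) (hc : c ∈ V) (hx : x ∈ V) (hab : a ≠ b) (hac : a ≠ c) {p q r : ℤ}
    (hq : 0 < q) (hr : 0 < r) (hsum : p + q + r = 1) (h : x = p • a + q • b + r • c) :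
    x = b + c - a := by
  obtain rfl : p = 1 - q - r := by linarith
  have hmem : b + c - a ∈ ({x, b, c} : Set L) :=
    hV.mem_triple_of_zsmul_eq (α := 1) (β := r - 1) (γ := q - 1) hx hb hc one_pos.le
      (by linarith) (by linarith) (by linarith) (by rw [h]; module)
  rcases hmem with hd | hd | hd
  · exact hd.symm
  · exact absurd (by simpa [sub_eq_iff_eq_add] using hd) hac.symm
  · exact absurd (by simpa [sub_eq_iff_eq_add, add_comm c] using hd) hab.symm

theorem mem_vertices_or_reflections (hV : IsEmptyVertexSet φ V)
    (ha : a ∈ V) (hb : b ∈ V) (hc : c ∈ V) (hab : a ≠ b) (hac : a ≠ c) (hbc : b ≠ c)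
    (hx : x ∈ V) (hspan : x ∈ affineSpan ℤ {a, b, c}) :
    x ∈ ({a, b, c} : Set L) ∨ x = b + c - a ∨ x = c + a - b ∨ x = a + b - c := by
  obtain ⟨q, r, hqr⟩ := mem_affineSpan_triple_iff.1 hspan
  obtain ⟨p, hsum⟩ : ∃ p, p + q + r = 1 := ⟨1 - q - r, by ring⟩
  have h : x = p • a + q • b + r • c := by
    obtain rfl : p = 1 - q - r := by linarith
    linear_combination (norm := module) (-1 : ℤ) • hqr
  have hsum₁ : q + r + p = 1 := by linarith
  have hsum₂ : r + p + q = 1 := by linarith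
  have h₁ : x = q • b + r • c + p • a := by rw [h]; abel
  have h₂ : x = r • c + p • a + q • b := by rw [h]; abel
  have hsigns : (q ≤ 0 ∧ r ≤ 0) ∨ (r ≤ 0 ∧ p ≤ 0) ∨ (p ≤ 0 ∧ q ≤ 0) ∨
      (0 < q ∧ 0 < r) ∨ (0 < r ∧ 0 < p) ∨ (0 < p ∧ 0 < q) := by lia
  rcases hsigns with ⟨hq, hr⟩ | ⟨hr, hp⟩ | ⟨hp, hq⟩ | ⟨hq, hr⟩ | ⟨hr, hp⟩ | ⟨hp, hq⟩
  · left; simp [hV.eq_of_nonpos_of_nonpos hb hc hx hab hac hq hr hsum h]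
  · left; simp [hV.eq_of_nonpos_of_nonpos hc ha hx hbc hab.symm hr hp hsum₁ h₁]
  · left; simp [hV.eq_of_nonpos_of_nonpos ha hb hx hac.symm hbc.symm hp hq hsum₂ h₂]
  · right; left; exact hV.eq_add_sub_of_pos_of_pos hb hc hx hab hac hq hr hsum h
  · right; right; left
    exact hV.eq_add_sub_of_pos_of_pos hc ha hx hbc hab.symm hr hp hsum₁ h₁
  · right; right; right
    exact hV.eq_add_sub_of_pos_of_pos ha hb hx hac.symm hbc.symm hp hq hsum₂ h₂

theorem eq_left_or_eq_right_of_two_zsmul_eq_add (hV : IsEmptyVertexSet φ V)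
    (ha : a ∈ V) (hb : b ∈ V) (hx : (2 : ℤ) • x = a + b) : x = a ∨ x = b := by
  simpa using hV.mem_triple_of_zsmul_eq (α := 1) (β := 1) (γ := 0) ha hb hb one_pos.le one_pos.le
    le_rfl (by norm_num) (by simpa using hx)

theorem eq_parallelogram_of_add_sub_mem (hV : IsEmptyVertexSet φ V)
    (ha : a ∈ V) (hb : b ∈ V) (hc : c ∈ V) (hab : a ≠ b) (hac : a ≠ c) (hbc : b ≠ c)
    (hspan : V ⊆ affineSpan ℤ {a, b, c}) (hd : b + c - a ∈ V) : V = {a, b, c, b + c - a} := by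
  refine Set.Subset.antisymm (fun x hx => ?_) (by simp [Set.insert_subset_iff, *])
  rcases hV.mem_vertices_or_reflections ha hb hc hab hac hbc hx (hspan hx) with h | h | h | h
  · rcases h with rfl | rfl | rfl <;> simp
  · simp [h]
  · rcases hV.eq_left_or_eq_right_of_two_zsmul_eq_add (x := c) hd hx (by rw [h]; module)
      with hcd | hcx
    · exact absurd (by simpa [eq_sub_iff_add_eq, add_comm c] using hcd) hab
    · simp [← hcx]
  · rcases hV.eq_left_or_eq_right_of_two_zsmul_eq_add (x := b) hd hx (by rw [h]; module)
      with hbd | hbx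
    · exact absurd (by simpa [eq_sub_iff_add_eq] using hbd) hac
    · simp [← hbx]

theorem eq_triangle_or_parallelogram (hV : IsEmptyVertexSet φ V)
    (ha : a ∈ V) (hb : b ∈ V) (hc : c ∈ V) (hab : a ≠ b) (hac : a ≠ c) (hbc : b ≠ c)
    (hspan : V ⊆ affineSpan ℤ {a, b, c}) :
    V = {a, b, c} ∨ ∃ a' b' c', affineSpan ℤ {a', b', c'} = affineSpan ℤ {a, b, c} ∧
      V = {a', b', c', b' + c' - a'} := by
  by_cases htri : V ⊆ {a, b, c}
  · exact Or.inl (htri.antisymm (by simp [Set.insert_subset_iff, *]))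
  obtain ⟨x, hx, hxabc⟩ := Set.not_subset.1 htri
  right
  have hbca : ({b, c, a} : Set L) = {a, b, c} := by rw [Set.pair_comm, Set.insert_comm]
  have hcab : ({c, a, b} : Set L) = {a, b, c} := by rw [Set.insert_comm, Set.pair_comm]
  rcases (hV.mem_vertices_or_reflections ha hb hc hab hac hbc hx (hspan hx)).resolve_left hxabc
    with rfl | rfl | rfl
  · exact ⟨a, b, c, rfl, hV.eq_parallelogram_of_add_sub_mem ha hb hc hab hac hbc hspan hx⟩
  · exact ⟨b, c, a, by rw [hbca],
      hV.eq_parallelogram_of_add_sub_mem hb hc ha hbc hab.symm hac.symm (by rwa [hbca]) hx⟩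
  · exact ⟨c, a, b, by rw [hcab],
      hV.eq_parallelogram_of_add_sub_mem hc ha hb hac.symm hbc.symm hab (by rwa [hcab]) hx⟩

end IsEmptyVertexSet

theorem latticeEmbed₂_injective : Function.Injective latticeEmbed₂ :=
  Int.cast_injective.comp_left

/-- `latticeEmbed₂` as an additive homomorphism. -/
def latticeHom₂ : (Fin 2 → ℤ) →+ (Fin 2 → ℝ) := (Int.castAddHom ℝ).compLeft (Fin 2)

theorem IsEmptyVertexSet.exists_affineSpan_int_eq_top {V : Set (Fin 2 → ℤ)}
    (hV : IsEmptyVertexSet latticeEmbed₂ V) (hspan : affineSpan ℝ (latticeEmbed₂ '' V) = ⊤) :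
    ∃ a ∈ V, ∃ b ∈ V, ∃ c ∈ V, a ≠ b ∧ a ≠ c ∧ b ≠ c ∧ affineSpan ℤ {a, b, c} = ⊤ := by
  obtain ⟨t, htV, hcard, ht⟩ :=
    exists_subset_ncard_eq_finrank_add_one_affineSpan_eq_top hspan
  rw [Module.finrank_fin_fun, Set.ncard_eq_three] at hcard
  obtain ⟨u, v, w, huv, huw, hvw, rfl⟩ := hcard
  obtain ⟨⟨a, ha, rfl⟩, ⟨b, hb, rfl⟩, ⟨c, hc, rfl⟩⟩ :
      u ∈ latticeEmbed₂ '' V ∧ v ∈ latticeEmbed₂ '' V ∧ w ∈ latticeEmbed₂ '' V := by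
    simpa only [Set.insert_subset_iff, Set.singleton_subset_iff] using htV
  refine ⟨a, ha, b, hb, c, hc, ne_of_apply_ne _ huv, ne_of_apply_ne _ huw, ne_of_apply_ne _ hvw,
    eq_top_iff.2 fun x _ => ?_⟩
  exact hV.mem_affineSpan_int_of_mem_affineSpan_real (φ := latticeHom₂) ha hb hc
    (ht ▸ AffineSubspace.mem_top ..)

theorem exists_GL_image_eq_standard {a b c : Fin 2 → ℤ} (h : affineSpan ℤ {a, b, c} = ⊤) :
    ∃ (A : GL (Fin 2) ℤ) (t : Fin 2 → ℤ),
      (fun x => (A : Matrix (Fin 2) (Fin 2) ℤ) *ᵥ x + t) '' {a, b, c} =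
        {![0, 0], ![1, 0], ![0, 1]} ∧
      (fun x => (A : Matrix (Fin 2) (Fin 2) ℤ) *ᵥ x + t) '' {a, b, c, b + c - a} =
        {![0, 0], ![1, 0], ![0, 1], ![1, 1]} := by
  obtain ⟨A, t, hA₀, hA⟩ := exists_GL_mulVec_add_eq_single (p₀ := a) (p := ![b, c])
    (by rwa [Matrix.range_cons_cons_empty])
  have ha : (A : Matrix (Fin 2) (Fin 2) ℤ) *ᵥ a + t = ![0, 0] := hA₀.trans (by decide)
  have hb : (A : Matrix (Fin 2) (Fin 2) ℤ) *ᵥ b + t = ![1, 0] := (hA 0).trans (by decide)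
  have hc : (A : Matrix (Fin 2) (Fin 2) ℤ) *ᵥ c + t = ![0, 1] := (hA 1).trans (by decide)
  have hd : (A : Matrix (Fin 2) (Fin 2) ℤ) *ᵥ (b + c - a) + t = ![1, 1] := by
    calc
      _ = ((A : Matrix (Fin 2) (Fin 2) ℤ) *ᵥ b + t) + ((A : Matrix (Fin 2) (Fin 2) ℤ) *ᵥ c + t) -
          ((A : Matrix (Fin 2) (Fin 2) ℤ) *ᵥ a + t) := by
        rw [Matrix.mulVec_sub, Matrix.mulVec_add]
        abel
      _ = ![1, 1] := by rw [ha, hb, hc]; decide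
  exact ⟨A, t, by simp only [Set.image_insert_eq, Set.image_singleton, ha, hb, hc],
    by simp only [Set.image_insert_eq, Set.image_singleton, ha, hb, hc, hd]⟩

theorem lattice_polygon_no_interior_points_classification_general
    (V : Set (Fin 2 → ℤ))
    (hspan : affineSpan ℝ (latticeEmbed₂ '' V) = ⊤)
    (hext : ∀ v ∈ V, latticeEmbed₂ v ∈ Set.extremePoints ℝ (convexHull ℝ (latticeEmbed₂ '' V)))
    (hlat : ∀ x : Fin 2 → ℤ, latticeEmbed₂ x ∈ convexHull ℝ (latticeEmbed₂ '' V) → x ∈ V) :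
    ∃ (A : Matrix.GeneralLinearGroup (Fin 2) ℤ) (t : Fin 2 → ℤ),
      ((fun x => (A : Matrix (Fin 2) (Fin 2) ℤ).mulVec x + t) '' V =
        ({![0,0], ![1,0], ![0,1]} : Set (Fin 2 → ℤ))) ∨
      ((fun x => (A : Matrix (Fin 2) (Fin 2) ℤ).mulVec x + t) '' V =
        ({![0,0], ![1,0], ![0,1], ![1,1]} : Set (Fin 2 → ℤ))) := by
  have hV : IsEmptyVertexSet latticeHom₂ V :=
    isEmptyVertexSet_of_extremePoints latticeEmbed₂_injective hext hlat
  obtain ⟨a, ha, b, hb, c, hc, hab, hac, hbc, htop⟩ := hV.exists_affineSpan_int_eq_top hspan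
  rcases hV.eq_triangle_or_parallelogram ha hb hc hab hac hbc (by simp [htop]) with
    rfl | ⟨a', b', c', hspan', rfl⟩
  · obtain ⟨A, t, htri, -⟩ := exists_GL_image_eq_standard htop
    exact ⟨A, t, Or.inl htri⟩
  · obtain ⟨A, t, -, hsquare⟩ := exists_GL_image_eq_standard (hspan'.trans htop)
    exact ⟨A, t, Or.inr hsquare⟩

/-- Up to the action of `GL(2,ℤ)` and lattice translations, the only convex lattice polygons
whose lattice points are exactly their vertices are the standard triangle and the unit square. -/
theorem lattice_polygon_no_interior_points_classification
    (V : Finset (Fin 2 → ℤ))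
    (hspan : affineSpan ℝ (latticeEmbed₂ '' (V : Set (Fin 2 → ℤ))) = ⊤)
    (hext : ∀ v ∈ V, latticeEmbed₂ v ∈
      Set.extremePoints ℝ (convexHull ℝ (latticeEmbed₂ '' (V : Set (Fin 2 → ℤ)))))
    (hlat : ∀ x : Fin 2 → ℤ,
      latticeEmbed₂ x ∈ convexHull ℝ (latticeEmbed₂ '' (V : Set (Fin 2 → ℤ))) ↔ x ∈ V) :
    ∃ (A : Matrix.GeneralLinearGroup (Fin 2) ℤ) (t : Fin 2 → ℤ),
      ((fun x => (A : Matrix (Fin 2) (Fin 2) ℤ).mulVec x + t) '' (V : Set (Fin 2 → ℤ)) =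
        ({![0,0], ![1,0], ![0,1]} : Set (Fin 2 → ℤ))) ∨
      ((fun x => (A : Matrix (Fin 2) (Fin 2) ℤ).mulVec x + t) '' (V : Set (Fin 2 → ℤ)) =
        ({![0,0], ![1,0], ![0,1], ![1,1]} : Set (Fin 2 → ℤ))) := by
  exact lattice_polygon_no_interior_points_classification_general V hspan hext fun x => (hlat x).1
end

section
/- (Pick's theorem) Let V ⊂ ℤ² be a finite set whose convex hull P := convexHull ℝ V (viewing ℤ² ⊂ ℝ²) is two-dimensional. Let i be the number of lattice points in the interior of P and b the number of lattice points on the topological frontier of P. Then the Lebesgue measure (area) of P equals i + b/2 − 1. -/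
open MeasureTheory

/-! Slice `P` by the vertical lines through lattice points. A slice of positive length meets as many
lattice points, those at its two ends counting one half each, as the difference of the symmetrised
floors of its end ordinates. Giving the lattice points of `P` weight `1` in the interior and `1 / 2`
on the frontier, `i + b / 2` is therefore a trapezoidal sum of the symmetrised floors of the two
boundary functions, up to the two extreme slices, which exceed their terms by `1 / 2` each.

That trapezoidal sum is exactly the area. The boundary functions are made of edges between lattice
points, and the half turn about the midpoint of an edge preserves both the edge and the lattice.
Symmetrised floors respect this half turn, so both the trapezoidal sum and the integral over the
edge equal its width times the ordinate of its midpoint. -/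

section PickTheorem

open Set

/-- The symmetrised floor: the identity on `ℤ` and `n + 1 / 2` on `(n, n + 1)`. It counts integers
with weight `1 / 2` at an end point: for `x < y`, `[x, y]` contains `symmFloor y - symmFloor x` of
them. -/
noncomputable def symmFloor (y : ℝ) : ℝ := (⌊y⌋ + ⌈y⌉) / 2

@[simp]
lemma symmFloor_intCast (n : ℤ) : symmFloor n = n := by
  simp [symmFloor]

lemma symmFloor_intCast_sub (n : ℤ) (y : ℝ) : symmFloor (n - y) = n - symmFloor y := by
  have floor_sub : ⌊(n : ℝ) - y⌋ = n - ⌈y⌉ := by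
    rw [sub_eq_add_neg, Int.floor_intCast_add, Int.floor_neg, ← sub_eq_add_neg]
  have ceil_sub : ⌈(n : ℝ) - y⌉ = n - ⌊y⌋ := by
    rw [sub_eq_add_neg, Int.ceil_intCast_add, Int.ceil_neg, ← sub_eq_add_neg]
  rw [symmFloor, symmFloor, floor_sub, ceil_sub]
  push_cast
  ring

lemma ncard_intCast_preimage_Ioo {x y : ℝ} (hxy : x < y) :
    (((↑) ⁻¹' Ioo x y : Set ℤ).ncard : ℝ) = ⌈y⌉ - ⌊x⌋ - 1 := by
  have floor_lt_ceil : ⌊x⌋ < ⌈y⌉ := Int.lt_ceil.2 ((Int.floor_le x).trans_lt hxy)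
  rw [Int.preimage_Ioo, ← Finset.coe_Ioo, ncard_coe_finset, Int.card_Ioo, ← Int.cast_natCast,
    Int.toNat_of_nonneg (by lia)]
  push_cast
  rfl

lemma ncard_intCast_preimage_Icc {x y : ℝ} (hxy : x ≤ y) :
    (((↑) ⁻¹' Icc x y : Set ℤ).ncard : ℝ) = ⌊y⌋ - ⌈x⌉ + 1 := by
  have ceil_lt_floor_add_two : (⌈x⌉ : ℝ) < (⌊y⌋ + 2 : ℤ) := by
    push_cast
    linarith [Int.ceil_lt_add_one x, Int.lt_floor_add_one y]
  rw [Int.cast_lt] at ceil_lt_floor_add_two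
  rw [Int.preimage_Icc, ← Finset.coe_Icc, ncard_coe_finset, Int.card_Icc, ← Int.cast_natCast,
    Int.toNat_of_nonneg (by lia)]
  push_cast
  ring

lemma ncard_intCast_preimage_Ioo_add_Icc {x y : ℝ} (hxy : x < y) :
    (((↑) ⁻¹' Ioo x y : Set ℤ).ncard + ((↑) ⁻¹' Icc x y : Set ℤ).ncard : ℝ) =
      2 * (symmFloor y - symmFloor x) := by
  rw [ncard_intCast_preimage_Ioo hxy, ncard_intCast_preimage_Icc hxy.le, symmFloor, symmFloor]
  ring

/-- The trapezoidal rule with step `1` for the integral over `[a, c]` of a function with values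
`u`. -/
noncomputable def trapezoidSum (u : ℤ → ℝ) (a c : ℤ) : ℝ :=
  ∑ x ∈ Finset.Ico a c, (u x + u (x + 1)) / 2

lemma trapezoidSum_sub (u v : ℤ → ℝ) (a c : ℤ) :
    trapezoidSum (fun x ↦ u x - v x) a c = trapezoidSum u a c - trapezoidSum v a c := by
  rw [trapezoidSum, trapezoidSum, trapezoidSum, ← Finset.sum_sub_distrib]
  exact Finset.sum_congr rfl fun x _ ↦ by ring

lemma trapezoidSum_add_adjacent (u : ℤ → ℝ) {a b c : ℤ} (hab : a ≤ b) (hbc : b ≤ c) :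
    trapezoidSum u a b + trapezoidSum u b c = trapezoidSum u a c := by
  rw [trapezoidSum, trapezoidSum, trapezoidSum,
    ← Finset.sum_union (Finset.Ico_disjoint_Ico_consecutive a b c),
    Finset.Ico_union_Ico_eq_Ico hab hbc]

lemma trapezoidSum_eq_sum_Ioo (u : ℤ → ℝ) {a c : ℤ} (hac : a < c) :
    trapezoidSum u a c = (u a + u c) / 2 + ∑ x ∈ Finset.Ioo a c, u x := by
  have shift : ∑ x ∈ Finset.Ico a c, u (x + 1) = ∑ x ∈ Finset.Ioc a c, u x := by
    refine Finset.sum_bij (fun x _ ↦ x + 1) ?_ (by simp) ?_ (by simp)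
    · grind
    · exact fun x hx ↦ ⟨x - 1, by grind⟩
  rw [trapezoidSum, ← Finset.sum_div, Finset.sum_add_distrib, shift,
    ← Finset.Ioo_insert_left hac, ← Finset.Ioo_insert_right hac,
    Finset.sum_insert Finset.left_notMem_Ioo, Finset.sum_insert Finset.right_notMem_Ioo]
  ring

lemma trapezoidSum_of_central_symmetry {u : ℤ → ℝ} {a c : ℤ} {s : ℝ} (hac : a ≤ c)
    (hu : ∀ x ∈ Icc a c, u (a + c - x) = s - u x) :
    trapezoidSum u a c = (c - a) * s / 2 := by
  have reflected : trapezoidSum u a c =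
      ∑ x ∈ Finset.Ico a c, (s - (u x + u (x + 1)) / 2) := by
    refine Finset.sum_bij' (fun x _ ↦ a + c - 1 - x) (fun x _ ↦ a + c - 1 - x)
      (by grind) (by grind) (by grind) (by grind) fun x hx ↦ ?_
    have hx' := Finset.mem_Ico.1 hx
    have left := hu (a + c - x) ⟨by lia, by lia⟩
    have right := hu (a + c - (x + 1)) ⟨by lia, by lia⟩
    rw [sub_sub_cancel] at left right
    rw [left, right, show a + c - 1 - x = a + c - (x + 1) by ring,
      show a + c - (x + 1) + 1 = a + c - x by ring]
    ring
  have card : ((c - a).toNat : ℝ) = c - a := by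
    rw [← Int.cast_natCast, Int.toNat_of_nonneg (sub_nonneg.2 hac), Int.cast_sub]
  rw [Finset.sum_sub_distrib, Finset.sum_const, Int.card_Ico, nsmul_eq_mul, card] at reflected
  change trapezoidSum u a c = (c - a) * s - trapezoidSum u a c at reflected
  linarith

lemma intervalIntegral_of_central_symmetry {h : ℝ → ℝ} {a c s : ℝ}
    (hint : IntervalIntegrable h volume a c) (hh : ∀ x ∈ uIcc a c, h (a + c - x) = s - h x) :
    ∫ x in a..c, h x = (c - a) * s / 2 := by
  have reflected : ∫ x in a..c, h x = (c - a) * s - ∫ x in a..c, h x :=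
    calc ∫ x in a..c, h x = ∫ x in a..c, h (a + c - x) := by
          rw [intervalIntegral.integral_comp_sub_left, add_sub_cancel_right, add_sub_cancel_left]
      _ = ∫ x in a..c, (s - h x) := intervalIntegral.integral_congr hh
      _ = (c - a) * s - ∫ x in a..c, h x := by
          rw [intervalIntegral.integral_sub intervalIntegrable_const hint,
            intervalIntegral.integral_const, smul_eq_mul]
  linarith

/-- The graph of `h` over `[a, c]` is a polygonal path with vertices in `ℤ²`, listed from left to
right. -/
inductive IsLatticePolygonal (h : ℝ → ℝ) : ℤ → ℤ → Prop
  | point (a y : ℤ) (left : h a = y) : IsLatticePolygonal h a a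
  | cons (a b c y : ℤ) (m : ℝ) (lt : a < b)
      (edge : ∀ x ∈ Icc (a : ℝ) b, h x = y + m * (x - a)) (tail : IsLatticePolygonal h b c) :
      IsLatticePolygonal h a c

namespace IsLatticePolygonal

variable {h : ℝ → ℝ} {a b c : ℤ}

lemma le (hh : IsLatticePolygonal h a c) : a ≤ c := by
  induction hh with
  | point => rfl
  | cons _ _ _ _ _ lt _ _ ih => exact lt.le.trans ih

lemma exists_left (hh : IsLatticePolygonal h a c) : ∃ n : ℤ, h a = n := by
  cases hh with
  | point _ y left => exact ⟨y, left⟩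
  | cons _ b _ y _ lt edge _ =>
    exact ⟨y, by simpa using edge a ⟨le_rfl, Int.cast_le.2 lt.le⟩⟩

lemma exists_right (hh : IsLatticePolygonal h a c) : ∃ n : ℤ, h c = n := by
  induction hh with
  | point _ y left => exact ⟨y, left⟩
  | cons _ _ _ _ _ _ _ _ ih => exact ih

lemma neg (hh : IsLatticePolygonal h a c) : IsLatticePolygonal (fun x ↦ -h x) a c := by
  induction hh with
  | point a y left => exact .point a (-y) (by simp [left])
  | cons a b c y m lt edge _ ih =>
    exact .cons a b c (-y) (-m) lt (fun x hx ↦ by rw [edge x hx]; push_cast; ring) ih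

lemma continuousOn (hh : IsLatticePolygonal h a c) : ContinuousOn h (Icc a c) := by
  induction hh with
  | point => simp
  | cons a b c y m lt edge tail ih =>
    have edge_continuous : ContinuousOn h (Icc a b) :=
      ContinuousOn.congr (f := fun x : ℝ ↦ y + m * (x - a)) (by fun_prop) edge
    rw [← Icc_union_Icc_eq_Icc (Int.cast_le.2 lt.le) (Int.cast_le.2 tail.le)]
    exact edge_continuous.union_of_isClosed ih isClosed_Icc isClosed_Icc

lemma intervalIntegrable (hh : IsLatticePolygonal h a c) : IntervalIntegrable h volume a c :=
  hh.continuousOn.intervalIntegrable_of_Icc (Int.cast_le.2 hh.le)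

/-- The central symmetry of each edge about its midpoint preserves `ℤ²`, so that both sides give
the edge the value at its midpoint times its width. -/
theorem trapezoidSum_symmFloor_eq_integral (hh : IsLatticePolygonal h a c) :
    trapezoidSum (fun x ↦ symmFloor (h x)) a c = ∫ x in a..c, h x := by
  induction hh with
  | point => simp [trapezoidSum]
  | cons a b c y m lt edge tail ih =>
    have hab : (a : ℝ) ≤ b := Int.cast_le.2 lt.le
    have hh := IsLatticePolygonal.cons a b c y m lt edge tail
    have edge_integrable : IntervalIntegrable h volume a b :=
      hh.intervalIntegrable.mono_set (by
        rw [uIcc_of_le hab, uIcc_of_le (Int.cast_le.2 hh.le)]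
        exact Icc_subset_Icc_right (Int.cast_le.2 tail.le))
    obtain ⟨n, hn⟩ := tail.exists_left
    have edge_symmetry : ∀ x ∈ Icc (a : ℝ) b, h (a + b - x) = (y + n : ℤ) - h x := by
      intro x hx
      rw [edge b ⟨hab, le_rfl⟩] at hn
      rw [edge x hx, edge _ ⟨by linarith [hx.2], by linarith [hx.1]⟩, Int.cast_add, ← hn]
      ring
    have edge_eq : trapezoidSum (fun x ↦ symmFloor (h x)) a b = ∫ x in a..b, h x := by
      rw [intervalIntegral_of_central_symmetry edge_integrable (by rwa [uIcc_of_le hab])]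
      refine trapezoidSum_of_central_symmetry lt.le fun x hx ↦ ?_
      rw [← symmFloor_intCast_sub, ← edge_symmetry x ⟨Int.cast_le.2 hx.1, Int.cast_le.2 hx.2⟩]
      push_cast
      rfl
    rw [← trapezoidSum_add_adjacent _ lt.le tail.le, edge_eq, ih,
      intervalIntegral.integral_add_adjacent_intervals edge_integrable tail.intervalIntegrable]

end IsLatticePolygonal

/-- The projection of a planar set to the first coordinate axis. -/
def shadow {α : Type*} (K : Set (Fin 2 → α)) : Set α := image (fun z ↦ z 0) K

/-- The vertical section of a planar set at abscissa `x`, as a set of ordinates. -/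
def column {α : Type*} (K : Set (Fin 2 → α)) (x : α) : Set α := {y | ![x, y] ∈ K}

section Columns

variable {α : Type*} {K : Set (Fin 2 → α)} {x : α} {z : Fin 2 → α}

lemma mem_column_self_iff : z 1 ∈ column K (z 0) ↔ z ∈ K := by
  rw [column, mem_ofPred_eq, show ![z 0, z 1] = z by ext i; fin_cases i <;> rfl]

lemma nonempty_column_iff : (column K x).Nonempty ↔ x ∈ shadow K := by
  constructor
  · rintro ⟨y, hy⟩
    exact ⟨![x, y], hy, rfl⟩
  · rintro ⟨z, hz, rfl⟩
    exact ⟨z 1, mem_column_self_iff.2 hz⟩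

lemma ncard_eq_sum_ncard_column (hK : K.Finite) {S : Finset α} (hS : shadow K ⊆ S) :
    K.ncard = ∑ x ∈ S, (column K x).ncard := by
  classical
  lift K to Finset (Fin 2 → α) using hK
  rw [ncard_coe_finset, Finset.card_eq_sum_card_fiberwise fun z hz ↦ hS ⟨z, hz, rfl⟩]
  refine Finset.sum_congr rfl fun x _ ↦ ?_
  have column_image : ((K.filter fun z ↦ z 0 = x : Finset _) : Set (Fin 2 → α)) =
      (fun y ↦ ![x, y]) '' column (K : Set (Fin 2 → α)) x := by
    ext z
    rw [Finset.mem_coe, Finset.mem_filter]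
    constructor
    · rintro ⟨hz, rfl⟩
      exact ⟨z 1, mem_column_self_iff.2 hz, by ext i; fin_cases i <;> rfl⟩
    · rintro ⟨y, hy, rfl⟩
      exact ⟨hy, rfl⟩
  rw [← ncard_coe_finset, column_image,
    ncard_image_of_injective _ fun y y' h ↦ by simpa using congrFun h 1]

end Columns

theorem volume_real_eq_integral_column {K : Set (Fin 2 → ℝ)} (hK : MeasurableSet K)
    (hfin : volume K ≠ ⊤) : volume.real K = ∫ x, volume.real (column K x) := by
  have hpres := (volume_preserving_finTwoArrow ℝ).symm
  have hmeas : MeasurableSet (MeasurableEquiv.finTwoArrow.symm ⁻¹' K : Set (ℝ × ℝ)) :=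
    hpres.measurable hK
  have hprod := hpres.measure_preimage hK.nullMeasurableSet
  rw [Measure.volume_eq_prod] at hprod
  rw [measureReal_def, ← hprod, Measure.prod_apply hmeas,
    ← integral_toReal (measurable_measure_prodMk_left hmeas).aemeasurable
      (Measure.ae_measure_lt_top hmeas (hprod ▸ hfin))]
  rfl

/-- The ordinate of the top of the column of `K` at `x`; `0` if the column is empty. -/
noncomputable def upperBoundary (K : Set (Fin 2 → ℝ)) (x : ℝ) : ℝ := sSup (column K x)

/-- The ordinate of the bottom of the column of `K` at `x`; `0` if the column is empty. -/
noncomputable def lowerBoundary (K : Set (Fin 2 → ℝ)) (x : ℝ) : ℝ := sInf (column K x)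

section ConvexPlanarSets

variable {K : Set (Fin 2 → ℝ)} {a c x y : ℝ}

lemma exists_shadow_eq_Icc (hconv : Convex ℝ K) (hK : IsCompact K) (hne : K.Nonempty) :
    ∃ a c : ℝ, a ≤ c ∧ shadow K = Icc a c := by
  have hshadow := eq_Icc_of_connected_compact
    ((hconv.isConnected hne).image _ (continuous_apply 0).continuousOn)
    (hK.image (continuous_apply 0))
  exact ⟨_, _, nonempty_Icc.1 (hshadow ▸ hne.image _), hshadow⟩

lemma smul_vec_add_smul_vec {s t : ℝ} (hst : s + t = 1) (x y y' : ℝ) :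
    s • ![x, y] + t • ![x, y'] = ![x, s * y + t * y'] := by
  ext i
  fin_cases i <;> simp [← add_mul, hst]

lemma convex_column (hconv : Convex ℝ K) (x : ℝ) : Convex ℝ (column K x) := by
  intro y hy y' hy' s t hs ht hst
  have := hconv hy hy' hs ht hst
  rwa [smul_vec_add_smul_vec hst] at this

lemma isCompact_column (hK : IsCompact K) (x : ℝ) : IsCompact (column K x) :=
  (hK.image (continuous_apply 1)).of_isClosed_subset
    (hK.isClosed.preimage (f := fun y ↦ ![x, y]) (by fun_prop)) fun y hy ↦ ⟨![x, y], hy, rfl⟩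

lemma column_eq_Icc (hconv : Convex ℝ K) (hK : IsCompact K) (hx : x ∈ shadow K) :
    column K x = Icc (lowerBoundary K x) (upperBoundary K x) :=
  eq_Icc_of_connected_compact ((convex_column hconv x).isConnected (nonempty_column_iff.2 hx))
    (isCompact_column hK x)

lemma mem_extremePoints_of_shadow_of_column (hx : x ∈ extremePoints ℝ (shadow K))
    (hy : y ∈ extremePoints ℝ (column K x)) : ![x, y] ∈ extremePoints ℝ K := by
  refine mem_extremePoints.2 ⟨hy.1, ?_⟩
  rintro u hu v hv ⟨s, t, hs, ht, hst, huv⟩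
  have abscissas := (mem_extremePoints.1 hx).2 (u 0) ⟨u, hu, rfl⟩ (v 0) ⟨v, hv, rfl⟩
    ⟨s, t, hs, ht, hst, congrFun huv 0⟩
  have ordinates := (mem_extremePoints.1 hy).2 (u 1) (abscissas.1 ▸ mem_column_self_iff.2 hu)
    (v 1) (abscissas.2 ▸ mem_column_self_iff.2 hv) ⟨s, t, hs, ht, hst, congrFun huv 1⟩
  constructor <;> ext i <;> fin_cases i
  exacts [abscissas.1, ordinates.1, abscissas.2, ordinates.2]

lemma shadow_interior (hconv : Convex ℝ K) (hint : (interior K).Nonempty)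
    (hshadow : shadow K = Icc a c) : shadow (interior K) = Ioo a c := by
  apply Subset.antisymm
  · have := (isOpenMap_eval (X := fun _ : Fin 2 ↦ ℝ) 0).image_interior_subset K
    rw [← interior_Icc, ← hshadow]
    exact this
  · intro x hx
    have hac : a ≤ c := (hx.1.trans hx.2).le
    have dense : Icc a c ⊆ closure (shadow (interior K)) :=
      calc Icc a c = shadow K := hshadow.symm
        _ ⊆ shadow (closure (interior K)) := by
          rw [hconv.closure_interior_eq_closure_of_nonempty_interior hint]
          exact image_mono subset_closure
        _ ⊆ closure (shadow (interior K)) := image_closure_subset_closure_image (continuous_apply 0)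
    obtain ⟨u, hux, hu⟩ := mem_closure_iff.1 (dense ⟨le_rfl, hac⟩) (Iio x) isOpen_Iio hx.1
    obtain ⟨v, hxv, hv⟩ := mem_closure_iff.1 (dense ⟨hac, le_rfl⟩) (Ioi x) isOpen_Ioi hx.2
    have : (shadow (interior K)).OrdConnected :=
      (hconv.interior.is_linear_image (LinearMap.proj 0).isLinear).ordConnected
    exact this.out hu hv ⟨hux.le, hxv.le⟩

/-- A point of the column strictly between its ends lies on an open segment from an interior point
of `K` to one of the ends. -/
lemma column_interior (hconv : Convex ℝ K) (hK : IsCompact K) (hx : x ∈ shadow (interior K)) :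
    column (interior K) x = Ioo (lowerBoundary K x) (upperBoundary K x) := by
  have hcol := column_eq_Icc hconv hK (image_mono interior_subset hx)
  obtain ⟨w, hw⟩ := nonempty_column_iff.2 hx
  have subset_Ioo : column (interior K) x ⊆ Ioo (lowerBoundary K x) (upperBoundary K x) := by
    rw [← interior_Icc, ← hcol]
    exact preimage_interior_subset_interior_preimage (f := fun y ↦ ![x, y]) (by fun_prop)
  refine subset_Ioo.antisymm fun y hy ↦ ?_
  have hle := (hy.1.trans hy.2).le
  have ray {e : ℝ} (he : e ∈ column K x) (hwe : y ∈ openSegment ℝ w e) :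
      y ∈ column (interior K) x := by
    apply hconv.openSegment_interior_self_subset_interior hw he
    obtain ⟨s, t, hs, ht, hst, rfl⟩ := hwe
    exact ⟨s, t, hs, ht, hst, smul_vec_add_smul_vec hst _ _ _⟩
  rcases lt_trichotomy y w with hyw | rfl | hwy
  · refine ray (hcol ▸ left_mem_Icc.2 hle) ?_
    rw [openSegment_symm, openSegment_eq_Ioo (hy.1.trans hyw)]
    exact ⟨hy.1, hyw⟩
  · exact hw
  · refine ray (hcol ▸ right_mem_Icc.2 hle) ?_
    rw [openSegment_eq_Ioo (hwy.trans hy.2)]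
    exact ⟨hwy, hy.2⟩

theorem volume_real_eq_integral_boundary (hconv : Convex ℝ K) (hK : IsCompact K) (hac : a ≤ c)
    (hshadow : shadow K = Icc a c) :
    volume.real K = ∫ x in a..c, (upperBoundary K x - lowerBoundary K x) := by
  rw [volume_real_eq_integral_column hK.measurableSet hK.measure_ne_top,
    intervalIntegral.integral_of_le hac, ← integral_Icc_eq_integral_Ioc, ← hshadow,
    ← setIntegral_eq_integral_of_forall_compl_eq_zero (s := shadow K)]
  · refine setIntegral_congr_fun (hshadow ▸ measurableSet_Icc) fun x hx ↦ ?_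
    have hcol := column_eq_Icc hconv hK hx
    have hle := nonempty_Icc.1 (hcol ▸ nonempty_column_iff.2 hx)
    simp only [hcol, Real.volume_real_Icc_of_le hle]
  · intro x hx
    rw [← nonempty_column_iff, not_nonempty_iff_eq_empty] at hx
    rw [hx, measureReal_empty]

end ConvexPlanarSets

section LatticePointCount

variable {K : Set (Fin 2 → ℝ)}

lemma isClosedEmbedding_latticeEmbed₂ : Topology.IsClosedEmbedding latticeEmbed₂ :=
  .piMap fun _ : Fin 2 ↦ Int.isClosedEmbedding_coe_real

lemma finite_latticeEmbed₂_preimage (hK : IsCompact K) : (latticeEmbed₂ ⁻¹' K).Finite :=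
  isCompact_iff_finite.1 (isClosedEmbedding_latticeEmbed₂.isCompact_preimage hK)

lemma column_latticeEmbed₂_preimage (K : Set (Fin 2 → ℝ)) (x : ℤ) :
    column (latticeEmbed₂ ⁻¹' K) x = (↑) ⁻¹' column K x := by
  ext y
  rw [column, column, mem_ofPred_eq, mem_preimage, mem_preimage, mem_ofPred_eq,
    show latticeEmbed₂ ![x, y] = ![(x : ℝ), (y : ℝ)] by ext i; fin_cases i <;> rfl]

lemma ncard_latticeEmbed₂_preimage (hK : (latticeEmbed₂ ⁻¹' K).Finite) {S : Finset ℤ}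
    (hS : (↑) ⁻¹' shadow K ⊆ (S : Set ℤ)) :
    (latticeEmbed₂ ⁻¹' K).ncard = ∑ x ∈ S, ((↑) ⁻¹' column K x : Set ℤ).ncard := by
  rw [ncard_eq_sum_ncard_column hK (S := S)]
  · simp only [column_latticeEmbed₂_preimage]
  · rintro _ ⟨z, hz, rfl⟩
    exact hS ⟨latticeEmbed₂ z, hz, rfl⟩

lemma ncard_latticeEmbed₂_preimage_interior_add_frontier (hK : IsCompact K) :
    (latticeEmbed₂ ⁻¹' interior K).ncard + (latticeEmbed₂ ⁻¹' frontier K).ncard =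
      (latticeEmbed₂ ⁻¹' K).ncard := by
  rw [hK.isClosed.frontier_eq, preimage_sdiff, add_comm]
  exact ncard_sdiff_add_ncard_of_subset (preimage_mono interior_subset)
    (finite_latticeEmbed₂_preimage hK)

lemma ncard_column_of_boundary_eq_intCast (hconv : Convex ℝ K) (hK : IsCompact K) {x : ℝ}
    (hx : x ∈ shadow K) (hlower : ∃ n : ℤ, lowerBoundary K x = n)
    (hupper : ∃ n : ℤ, upperBoundary K x = n) :
    (((↑) ⁻¹' column K x : Set ℤ).ncard : ℝ) =
      symmFloor (upperBoundary K x) - symmFloor (lowerBoundary K x) + 1 := by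
  have hcol := column_eq_Icc hconv hK hx
  have hle := nonempty_Icc.1 (hcol ▸ nonempty_column_iff.2 hx)
  obtain ⟨m, hm⟩ := hlower
  obtain ⟨n, hn⟩ := hupper
  rw [hcol, ncard_intCast_preimage_Icc hle, hm, hn]
  simp

lemma ncard_column_interior_add_ncard_column (hconv : Convex ℝ K) (hK : IsCompact K) {x : ℝ}
    (hx : x ∈ shadow (interior K)) :
    (((↑) ⁻¹' column (interior K) x : Set ℤ).ncard + ((↑) ⁻¹' column K x : Set ℤ).ncard : ℝ) =
      2 * (symmFloor (upperBoundary K x) - symmFloor (lowerBoundary K x)) := by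
  have hcol := column_interior hconv hK hx
  rw [hcol, column_eq_Icc hconv hK (image_mono interior_subset hx)]
  exact ncard_intCast_preimage_Ioo_add_Icc
    (nonempty_Ioo.1 (hcol ▸ nonempty_column_iff.2 hx))

/-- Summed over the columns, the count of each column of positive length is twice its
`symmFloor`-length; the two extreme columns are counted only in `K`, not in its interior, and
contribute the `2`. -/
theorem ncard_interior_add_ncard_eq_trapezoidSum (hconv : Convex ℝ K) (hK : IsCompact K)
    (hint : (interior K).Nonempty) {a c : ℤ} (hshadow : shadow K = Icc (a : ℝ) c)
    (hupper : ∀ x ∈ ({a, c} : Set ℤ), ∃ n : ℤ, upperBoundary K x = n)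
    (hlower : ∀ x ∈ ({a, c} : Set ℤ), ∃ n : ℤ, lowerBoundary K x = n) :
    ((latticeEmbed₂ ⁻¹' interior K).ncard + (latticeEmbed₂ ⁻¹' K).ncard : ℝ) =
      2 * trapezoidSum
        (fun x ↦ symmFloor (upperBoundary K x) - symmFloor (lowerBoundary K x)) a c + 2 := by
  have hfin := finite_latticeEmbed₂_preimage hK
  have hshadow_int := shadow_interior hconv hint hshadow
  have hac : a < c := by
    have : (Ioo (a : ℝ) c).Nonempty := hshadow_int ▸ hint.image _
    exact Int.cast_lt.1 (nonempty_Ioo.1 this)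
  have interior_count : (latticeEmbed₂ ⁻¹' interior K).ncard =
      ∑ x ∈ Finset.Ioo a c, ((↑) ⁻¹' column (interior K) x : Set ℤ).ncard :=
    ncard_latticeEmbed₂_preimage (hfin.subset (preimage_mono interior_subset))
      (by simp [hshadow_int])
  have closed_count : (latticeEmbed₂ ⁻¹' K).ncard =
      ((↑) ⁻¹' column K a : Set ℤ).ncard + (((↑) ⁻¹' column K c : Set ℤ).ncard +
        ∑ x ∈ Finset.Ioo a c, ((↑) ⁻¹' column K x : Set ℤ).ncard) := by
    rw [ncard_latticeEmbed₂_preimage hfin (S := Finset.Icc a c) (by simp [hshadow]),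
      ← Finset.Ioc_insert_left hac.le, ← Finset.Ioo_insert_right hac,
      Finset.sum_insert (by simp [hac.ne]), Finset.sum_insert Finset.right_notMem_Ioo]
  have extreme_column {x : ℤ} (hx : x ∈ ({a, c} : Set ℤ)) :
      (((↑) ⁻¹' column K x : Set ℤ).ncard : ℝ) =
        symmFloor (upperBoundary K x) - symmFloor (lowerBoundary K x) + 1 := by
    have mem_shadow : (x : ℝ) ∈ shadow K := by
      rcases hx with rfl | rfl <;> simp [hshadow, hac.le]
    exact ncard_column_of_boundary_eq_intCast hconv hK mem_shadow (hlower x hx) (hupper x hx)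
  have middle_column (x : ℤ) (hx : x ∈ Finset.Ioo a c) :=
    ncard_column_interior_add_ncard_column hconv hK (x := x) (by simpa [hshadow_int] using hx)
  rw [trapezoidSum_eq_sum_Ioo _ hac, mul_add, Finset.mul_sum, ← Finset.sum_congr rfl middle_column,
    Finset.sum_add_distrib, interior_count, closed_count]
  push_cast
  rw [extreme_column (mem_insert a _), extreme_column (mem_insert_of_mem a rfl)]
  ring

theorem volume_real_eq_trapezoidSum (hconv : Convex ℝ K) (hK : IsCompact K) {a c : ℤ}
    (hshadow : shadow K = Icc (a : ℝ) c) (hupper : IsLatticePolygonal (upperBoundary K) a c)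
    (hlower : IsLatticePolygonal (lowerBoundary K) a c) :
    volume.real K = trapezoidSum
      (fun x ↦ symmFloor (upperBoundary K x) - symmFloor (lowerBoundary K x)) a c := by
  rw [trapezoidSum_sub, hupper.trapezoidSum_symmFloor_eq_integral,
    hlower.trapezoidSum_symmFloor_eq_integral, ← intervalIntegral.integral_sub
    hupper.intervalIntegrable hlower.intervalIntegrable]
  exact volume_real_eq_integral_boundary hconv hK (Int.cast_le.2 hupper.le) hshadow

end LatticePointCount

section UpperEdges

variable {K : Set (Fin 2 → ℝ)} {p q : Fin 2 → ℝ} {m x : ℝ}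

lemma chord_mem_column (hconv : Convex ℝ K) (hp : p ∈ K) (hq : q ∈ K) (hpq : p 0 < q 0)
    (hx : x ∈ Icc (p 0) (q 0)) :
    ((q 0 - x) * p 1 + (x - p 0) * q 1) / (q 0 - p 0) ∈ column K x := by
  have hpos : 0 < q 0 - p 0 := sub_pos.2 hpq
  have := hconv hp hq (div_nonneg (sub_nonneg.2 hx.2) hpos.le)
    (div_nonneg (sub_nonneg.2 hx.1) hpos.le) (by field_simp; ring)
  rw [column, mem_ofPred_eq]
  convert! this using 1
  ext i
  fin_cases i
  · change x = (q 0 - x) / (q 0 - p 0) * p 0 + (x - p 0) / (q 0 - p 0) * q 0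
    field_simp
    ring
  · change ((q 0 - x) * p 1 + (x - p 0) * q 1) / (q 0 - p 0) =
      (q 0 - x) / (q 0 - p 0) * p 1 + (x - p 0) / (q 0 - p 0) * q 1
    ring

lemma upperBoundary_eq_of_forall_le (hconv : Convex ℝ K) (hp : p ∈ K) (hq : q ∈ K)
    (hpq : p 0 < q 0) (hm : q 1 = p 1 + m * (q 0 - p 0))
    (hle : ∀ z ∈ K, z 1 ≤ p 1 + m * (z 0 - p 0)) (hx : x ∈ Icc (p 0) (q 0)) :
    upperBoundary K x = p 1 + m * (x - p 0) := by
  refine IsGreatest.csSup_eq ⟨?_, fun y hy ↦ hle _ hy⟩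
  convert! chord_mem_column hconv hp hq hpq hx using 1
  rw [hm, eq_div_iff (sub_pos.2 hpq).ne']
  ring

lemma forall_mem_convexHull_le {S : Set (Fin 2 → ℝ)} {k : ℝ}
    (hS : ∀ v ∈ S, v 1 ≤ k + m * (v 0 - x)) :
    ∀ z ∈ convexHull ℝ S, z 1 ≤ k + m * (z 0 - x) := by
  have half_plane : Convex ℝ {z : Fin 2 → ℝ | z 1 - m * z 0 ≤ k - m * x} :=
    convex_halfSpace_le ((LinearMap.proj 1 : (Fin 2 → ℝ) →ₗ[ℝ] ℝ) - m • LinearMap.proj 0).isLinear _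
  intro z hz
  have := convexHull_min (fun v hv ↦ by rw [mem_ofPred_eq]; linarith [hS v hv]) half_plane hz
  rw [mem_ofPred_eq] at this
  linarith

/-- The edge starting at `p` is the one of greatest slope. A vertex to the left of `p` and above
this edge would give, with `q`, a chord passing above `p`. -/
lemma exists_upper_edge {S : Set (Fin 2 → ℝ)} (hS : S.Finite)
    (htop : upperBoundary (convexHull ℝ S) (p 0) = p 1) (hright : ∃ v ∈ S, p 0 < v 0) :
    ∃ q ∈ S, p 0 < q 0 ∧ ∃ m, q 1 = p 1 + m * (q 0 - p 0) ∧
      ∀ z ∈ convexHull ℝ S, z 1 ≤ p 1 + m * (z 0 - p 0) := by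
  have hcompact : IsCompact (convexHull ℝ S) := hS.isCompact_convexHull ℝ
  have le_top : ∀ y ∈ column (convexHull ℝ S) (p 0), y ≤ p 1 := fun y hy ↦
    htop ▸ le_csSup (isCompact_column hcompact _).bddAbove hy
  have subset_hull := subset_convexHull ℝ S
  obtain ⟨q, ⟨hq, hpq⟩, hmax⟩ := exists_max_image {v ∈ S | p 0 < v 0}
    (fun v ↦ (v 1 - p 1) / (v 0 - p 0)) (hS.subset (sep_subset _ _)) hright
  have hpos : 0 < q 0 - p 0 := sub_pos.2 hpq
  obtain ⟨m, hm⟩ : ∃ m, m = (q 1 - p 1) / (q 0 - p 0) := ⟨_, rfl⟩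
  have hq_eq : q 1 = p 1 + m * (q 0 - p 0) := by
    rw [hm, div_mul_cancel₀ _ hpos.ne', add_sub_cancel]
  refine ⟨q, hq, hpq, m, hq_eq, forall_mem_convexHull_le fun v hv ↦ ?_⟩
  rcases lt_trichotomy (v 0) (p 0) with hvp | hvp | hpv
  · have chord_le := le_top _ (chord_mem_column (convex_convexHull ℝ S) (subset_hull hv)
      (subset_hull hq) (hvp.trans hpq) ⟨hvp.le, hpq.le⟩)
    rw [div_le_iff₀ (sub_pos.2 (hvp.trans hpq)), hq_eq] at chord_le
    refine le_of_mul_le_mul_left ?_ hpos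
    linarith
  · rw [hvp, sub_self, mul_zero, add_zero]
    exact le_top _ (hvp ▸ mem_column_self_iff.2 (subset_hull hv))
  · have slope_le := hmax v ⟨hv, hpv⟩
    rw [← hm, div_le_iff₀ (sub_pos.2 hpv)] at slope_le
    linarith

end UpperEdges

section LatticePolygons

/-- The convex hull of a finite set of lattice points. -/
abbrev latticePolygon (V : Finset (Fin 2 → ℤ)) : Set (Fin 2 → ℝ) :=
  convexHull ℝ (latticeEmbed₂ '' (V : Set (Fin 2 → ℤ)))

variable {V : Finset (Fin 2 → ℤ)} {a c : ℤ}

lemma isCompact_latticePolygon (V : Finset (Fin 2 → ℤ)) : IsCompact (latticePolygon V) :=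
  (V.finite_toSet.image _).isCompact_convexHull ℝ

lemma latticeEmbed₂_mem_latticePolygon {v : Fin 2 → ℤ} (hv : v ∈ V) :
    latticeEmbed₂ v ∈ latticePolygon V :=
  subset_convexHull ℝ _ (mem_image_of_mem _ hv)

lemma exists_upper_vertex {x : ℝ} (hx : x ∈ extremePoints ℝ (shadow (latticePolygon V))) :
    ∃ p ∈ V, p 0 = x ∧ upperBoundary (latticePolygon V) x = p 1 := by
  have hcol := column_eq_Icc (convex_convexHull ℝ _) (isCompact_latticePolygon V) hx.1
  have hle := nonempty_Icc.1 (hcol ▸ nonempty_column_iff.2 hx.1)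
  have top_extreme : upperBoundary (latticePolygon V) x ∈
      extremePoints ℝ (column (latticePolygon V) x) := by
    rw [hcol, extremePoints_Icc hle]
    exact mem_insert_of_mem _ rfl
  obtain ⟨p, hp, hpx⟩ := extremePoints_convexHull_subset
    (mem_extremePoints_of_shadow_of_column hx top_extreme)
  exact ⟨p, hp, congrFun hpx 0, (congrFun hpx 1).symm⟩

lemma exists_shadow_latticePolygon_eq_Icc (hV : V.Nonempty) :
    ∃ a c : ℤ, a ≤ c ∧ shadow (latticePolygon V) = Icc (a : ℝ) c := by
  have hne : (latticePolygon V).Nonempty := convexHull_nonempty_iff.2 (hV.to_set.image _)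
  obtain ⟨x, y, hxy, hshadow⟩ :=
    exists_shadow_eq_Icc (convex_convexHull ℝ _) (isCompact_latticePolygon V) hne
  have ends_extreme : {x, y} ⊆ extremePoints ℝ (shadow (latticePolygon V)) := by
    rw [hshadow, extremePoints_Icc hxy]
  obtain ⟨p, -, rfl, -⟩ := exists_upper_vertex (ends_extreme (mem_insert _ _))
  obtain ⟨q, -, rfl, -⟩ := exists_upper_vertex (ends_extreme (mem_insert_of_mem _ rfl))
  exact ⟨p 0, q 0, Int.cast_le.1 hxy, hshadow⟩

lemma isLatticePolygonal_upperBoundary_of_vertex {p : Fin 2 → ℤ} (hp : p ∈ V)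
    (htop : upperBoundary (latticePolygon V) (p 0) = p 1)
    (hshadow : shadow (latticePolygon V) = Icc (a : ℝ) c) :
    IsLatticePolygonal (upperBoundary (latticePolygon V)) (p 0) c := by
  induction hn : (c - p 0).toNat using Nat.strong_induction_on generalizing p with
  | h n ih =>
    have mem_Icc {v : Fin 2 → ℤ} (hv : v ∈ V) : (v 0 : ℝ) ∈ Icc (a : ℝ) c :=
      hshadow ▸ ⟨_, latticeEmbed₂_mem_latticePolygon hv, rfl⟩
    obtain ⟨hpa, hpc⟩ := mem_Icc hp
    rcases (Int.cast_le.1 hpc).eq_or_lt with hpc | hpc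
    · exact hpc ▸ .point _ _ htop
    have hright : ∃ z ∈ latticeEmbed₂ '' (V : Set (Fin 2 → ℤ)), (p 0 : ℝ) < z 0 := by
      obtain ⟨v, hv, hvc, -⟩ := exists_upper_vertex (V := V) (x := c) (by
        rw [hshadow, extremePoints_Icc (hpa.trans (Int.cast_le.2 hpc.le))]
        exact mem_insert_of_mem _ rfl)
      exact ⟨_, mem_image_of_mem _ hv, (Int.cast_lt.2 hpc).trans_eq hvc.symm⟩
    obtain ⟨_, ⟨q, hq, rfl⟩, hpq, m, hm, hle⟩ :=
      exists_upper_edge (p := latticeEmbed₂ p) (V.finite_toSet.image _) htop hright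
    have edge := fun x hx ↦ upperBoundary_eq_of_forall_le (x := x) (convex_convexHull ℝ _)
      (latticeEmbed₂_mem_latticePolygon hp) (latticeEmbed₂_mem_latticePolygon hq) hpq hm hle hx
    have hq_top : upperBoundary (latticePolygon V) (q 0) = q 1 :=
      (edge _ ⟨hpq.le, le_rfl⟩).trans hm.symm
    have hpq : p 0 < q 0 := Int.cast_lt.1 hpq
    have : q 0 ≤ c := Int.cast_le.1 (mem_Icc hq).2
    exact .cons _ _ _ (p 1) m hpq edge (ih _ (by lia) hq hq_top rfl)

theorem isLatticePolygonal_upperBoundary (hac : a ≤ c)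
    (hshadow : shadow (latticePolygon V) = Icc (a : ℝ) c) :
    IsLatticePolygonal (upperBoundary (latticePolygon V)) a c := by
  obtain ⟨p, hp, hpa, htop⟩ := exists_upper_vertex (V := V) (x := a) (by
    rw [hshadow, extremePoints_Icc (Int.cast_le.2 hac)]
    exact mem_insert _ _)
  obtain rfl : p 0 = a := Int.cast_injective hpa
  exact isLatticePolygonal_upperBoundary_of_vertex hp htop hshadow

/-- The reflection of the plane in the first coordinate axis. It exchanges the upper and the lower
boundary of a set. -/
def reflect {R : Type*} [Neg R] (z : Fin 2 → R) : Fin 2 → R := ![z 0, -z 1]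

lemma reflect_involutive {R : Type*} [InvolutiveNeg R] :
    Function.Involutive (reflect : (Fin 2 → R) → Fin 2 → R) := by
  intro z
  ext i
  fin_cases i <;> simp [reflect]

lemma latticePolygon_image_reflect (V : Finset (Fin 2 → ℤ)) :
    latticePolygon (V.image reflect) = reflect ⁻¹' latticePolygon V := by
  have reflect_linear : IsLinearMap ℝ (reflect : (Fin 2 → ℝ) → Fin 2 → ℝ) :=
    ⟨fun z w ↦ by ext i; fin_cases i <;> simp [reflect, add_comm],
      fun r z ↦ by ext i; fin_cases i <;> simp [reflect]⟩
  have embed_reflect (v : Fin 2 → ℤ) : latticeEmbed₂ (reflect v) = reflect (latticeEmbed₂ v) := by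
    ext i
    fin_cases i <;> simp [reflect, latticeEmbed₂]
  rw [← image_eq_preimage_of_inverse reflect_involutive.leftInverse
      reflect_involutive.rightInverse, reflect_linear.image_convexHull, latticePolygon,
    Finset.coe_image, image_image, image_image]
  simp only [embed_reflect]

lemma shadow_reflect_preimage {R : Type*} [InvolutiveNeg R] (K : Set (Fin 2 → R)) :
    shadow (reflect ⁻¹' K) = shadow K := by
  rw [← image_eq_preimage_of_inverse reflect_involutive.leftInverse
      reflect_involutive.rightInverse, shadow, shadow, image_image]
  rfl

lemma lowerBoundary_eq_neg_upperBoundary_reflect (K : Set (Fin 2 → ℝ)) (x : ℝ) :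
    lowerBoundary K x = -upperBoundary (reflect ⁻¹' K) x :=
  Real.sInf_def _

theorem isLatticePolygonal_lowerBoundary (hac : a ≤ c)
    (hshadow : shadow (latticePolygon V) = Icc (a : ℝ) c) :
    IsLatticePolygonal (lowerBoundary (latticePolygon V)) a c := by
  have hreflect := latticePolygon_image_reflect V
  rw [← shadow_reflect_preimage, ← hreflect] at hshadow
  have := (isLatticePolygonal_upperBoundary hac hshadow).neg
  rw [hreflect] at this
  simpa only [← lowerBoundary_eq_neg_upperBoundary_reflect] using this

end LatticePolygons

end PickTheorem

/-- Pick's theorem: the area of a two-dimensional lattice polygon equals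
`i + b/2 - 1`, where `i` is the number of interior lattice points and `b` is the
number of lattice points on the frontier. -/
theorem pick_theorem (V : Finset (Fin 2 → ℤ))
    (hspan : affineSpan ℝ (latticeEmbed₂ '' (V : Set (Fin 2 → ℤ))) = ⊤)
    (P : Set (Fin 2 → ℝ)) (hP : P = convexHull ℝ (latticeEmbed₂ '' (V : Set (Fin 2 → ℤ))))
    (i b : ℕ)
    (hi : i = Set.ncard {x : Fin 2 → ℤ | latticeEmbed₂ x ∈ interior P})
    (hb : b = Set.ncard {x : Fin 2 → ℤ | latticeEmbed₂ x ∈ frontier P}) :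
    (volume P).toReal = (i : ℝ) + (b : ℝ) / 2 - 1 := by
  obtain rfl : P = latticePolygon V := hP
  have hconv : Convex ℝ (latticePolygon V) := convex_convexHull ℝ _
  have hcompact := isCompact_latticePolygon V
  have hint : (interior (latticePolygon V)).Nonempty :=
    interior_convexHull_nonempty_iff_affineSpan_eq_top.2 hspan
  obtain ⟨a, c, hac, hshadow⟩ := exists_shadow_latticePolygon_eq_Icc
    (V := V) (by simpa using hint.mono interior_subset)
  have hupper := isLatticePolygonal_upperBoundary hac hshadow
  have hlower := isLatticePolygonal_lowerBoundary hac hshadow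
  have area := volume_real_eq_trapezoidSum hconv hcompact hshadow hupper hlower
  have count := ncard_interior_add_ncard_eq_trapezoidSum hconv hcompact hint hshadow
    (by simp [hupper.exists_left, hupper.exists_right])
    (by simp [hlower.exists_left, hlower.exists_right])
  rw [← area, ← ncard_latticeEmbed₂_preimage_interior_add_frontier hcompact] at count
  change i = (latticeEmbed₂ ⁻¹' interior (latticePolygon V)).ncard at hi
  change b = (latticeEmbed₂ ⁻¹' frontier (latticePolygon V)).ncard at hb
  rw [← hi, ← hb, measureReal_def, Nat.cast_add] at count
  linarith
end

section
/- Let S ⊂ ℤ³ be a finite set defining a 3-dimensional terminal Fano polytope, i.e.: each s ∈ S is primitive (the gcd of its coordinates is 1), the origin lies in the interior of P := convexHull ℝ S (viewing ℤ³ ⊂ ℝ³), every point of S is an extreme point of P, and P ∩ ℤ³ = S ∪ {0}. Then the cardinality of S is at most 14. -/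
/-- The embedding of the lattice `ℤ³` into `ℝ³`. -/
def latticeEmbed₃ (v : Fin 3 → ℤ) : Fin 3 → ℝ := fun i => (v i : ℝ)

/-!
If two vertices `s` and `t` are congruent modulo `2`, then their midpoint is a lattice point of the
polytope, hence is a vertex or the origin. A vertex is extreme, so in the first case `s = t`, and in
the second `t = -s`. Thus every residue class modulo `2` contains at most two vertices. The zero
class contains none, because a primitive vector is not divisible by `2`, and `2 * (2 ^ 3 - 1) = 14`.
-/

section Midpoint

variable {𝕜 E G : Type*} [Ring 𝕜] [Invertible (2 : 𝕜)] [AddCommGroup E] [Module 𝕜 E]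
  [AddCommGroup G]

theorem map_eq_midpoint_of_add_eq_add_self (φ : G →+ E) {s t m : G} (hm : s + t = m + m) :
    φ m = midpoint 𝕜 (φ s) (φ t) := by
  rw [eq_comm, midpoint_eq_iff', Equiv.pointReflection_apply, vsub_eq_sub, vadd_eq_add,
    ← map_sub, ← map_add, ← add_sub_right_comm, ← hm, add_sub_cancel_left]

variable [LinearOrder 𝕜] [IsStrictOrderedRing 𝕜] {P : Set E}

theorem eq_of_midpoint_mem_extremePoints {x y : E} (hx : x ∈ P) (hy : y ∈ P)
    (hxy : midpoint 𝕜 x y ∈ P.extremePoints 𝕜) : x = y :=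
  have ⟨hx_eq, hy_eq⟩ := (mem_extremePoints.1 hxy).2 x hx y hy (midpoint_mem_openSegment x y)
  hx_eq.trans hy_eq.symm

theorem eq_or_eq_neg_of_even_add (hP : Convex 𝕜 P) {φ : G →+ E} (hφ : Function.Injective φ)
    {S : Set G} (hext : ∀ s ∈ S, φ s ∈ P.extremePoints 𝕜)
    (hlat : ∀ x, φ x ∈ P → x ∈ S ∨ x = 0) {s t : G} (hs : s ∈ S) (ht : t ∈ S)
    (hst : Even (s + t)) : t = s ∨ t = -s := by
  obtain ⟨m, hm⟩ := hst
  have hmid : φ m = midpoint 𝕜 (φ s) (φ t) := map_eq_midpoint_of_add_eq_add_self φ hm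
  have hsP : φ s ∈ P := (hext s hs).1
  have htP : φ t ∈ P := (hext t ht).1
  rcases hlat m (hmid ▸ hP.midpoint_mem hsP htP) with hmS | rfl
  · exact .inl (hφ (eq_of_midpoint_mem_extremePoints hsP htP (hmid ▸ hext m hmS))).symm
  · exact .inr (eq_neg_of_add_eq_zero_right (hm.trans (add_zero 0)))

end Midpoint

section Counting

theorem encard_le_mul_encard_of_mapsTo {α β : Type*} {f : α → β} {s : Set α} {t : Set β}
    (ht : t.Finite) (hf : Set.MapsTo f s t) {n : ℕ∞}
    (hn : ∀ b ∈ t, (s ∩ f ⁻¹' {b}).encard ≤ n) : s.encard ≤ n * t.encard := by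
  lift t to Finset β using ht
  calc
    s.encard ≤ (⋃ b ∈ t, s ∩ f ⁻¹' {b}).encard :=
      Set.encard_le_encard fun a ha ↦ Set.mem_biUnion (hf ha) ⟨ha, rfl⟩
    _ ≤ ∑ b ∈ t, (s ∩ f ⁻¹' {b}).encard := t.set_encard_biUnion_le _
    _ ≤ t.card • n := Finset.sum_le_card_nsmul t _ n hn
    _ = n * (t : Set β).encard := by
      rw [Set.encard_coe_eq_coe_finsetCard, nsmul_eq_mul, mul_comm]

theorem encard_compl_singleton {α : Type*} [Fintype α] (a : α) :
    ({a}ᶜ : Set α).encard = (Fintype.card α - 1 : ℕ) := by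
  classical
  rw [← Finset.coe_singleton, ← Finset.coe_compl, Set.encard_coe_eq_coe_finsetCard,
    Finset.card_compl, Finset.card_singleton]

theorem encard_le_of_eq_or_eq_neg_of_even_add {G V : Type*} [AddCommGroup G] [AddGroup V]
    [Fintype V] {f : G →+ V} (hf : ∀ x, f x = 0 → Even x) {S : Set G}
    (hodd : ∀ s ∈ S, ¬Even s)
    (hS : ∀ s ∈ S, ∀ t ∈ S, Even (s + t) → t = s ∨ t = -s) :
    S.encard ≤ (2 * (Fintype.card V - 1) : ℕ) := by
  have hmaps : Set.MapsTo f S {0}ᶜ := fun s hs h0 ↦ hodd s hs (hf s h0)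
  rw [Nat.cast_mul, ← encard_compl_singleton (0 : V)]
  refine encard_le_mul_encard_of_mapsTo (Set.toFinite _) hmaps fun c _ ↦ ?_
  rcases (S ∩ f ⁻¹' {c}).eq_empty_or_nonempty with hempty | ⟨s, hs, hsc⟩
  · simp [hempty]
  have hfiber : S ∩ f ⁻¹' {c} ⊆ {s, -s} := by
    rintro t ⟨ht, htc⟩
    have hsub : Even (t - s) := hf _ (by rw [map_sub, htc, hsc, sub_self])
    have hadd : Even (s + t) := by
      simpa only [add_add_sub_cancel] using (Even.add_self s).add hsub
    exact hS s hs t ht hadd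
  calc
    (S ∩ f ⁻¹' {c}).encard ≤ ({s, -s} : Set G).encard := Set.encard_le_encard hfiber
    _ ≤ ({-s} : Set G).encard + 1 := Set.encard_insert_le _ _
    _ = 2 := by rw [Set.encard_singleton, one_add_one_eq_two]

end Counting

section IntegerVectors

variable {ι : Type*}

theorem even_of_forall_even {M : ι → Type*} [∀ i, Add (M i)] {v : ∀ i, M i}
    (hv : ∀ i, Even (v i)) : Even v := by
  choose w hw using hv
  exact ⟨w, funext hw⟩

theorem even_of_intCast_zmod_two_eq_zero {v : ι → ℤ}
    (hv : (Int.castAddHom (ZMod 2)).compLeft ι v = 0) : Even v :=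
  even_of_forall_even fun i ↦ ZMod.intCast_eq_zero_iff_even.1 (congrFun hv i)

theorem not_even_of_gcd_eq_one {v : Fin 3 → ℤ}
    (hv : Int.gcd (v 0) (Int.gcd (v 1) (v 2)) = 1) : ¬Even v := by
  rintro ⟨w, rfl⟩
  have hdvd (i : Fin 3) : (2 : ℤ) ∣ (w + w) i := (Even.add_self (w i)).two_dvd
  have htwo := Int.dvd_coe_gcd (hdvd 0) (Int.dvd_coe_gcd (hdvd 1) (hdvd 2))
  rw [hv] at htwo
  norm_num at htwo

end IntegerVectors

theorem terminal_fano_polytope_card_le_14_general {ι 𝕜 E : Type*} [Fintype ι] [Ring 𝕜]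
    [LinearOrder 𝕜] [IsStrictOrderedRing 𝕜] [Invertible (2 : 𝕜)] [AddCommGroup E] [Module 𝕜 E]
    {φ : (ι → ℤ) →+ E} (hφ : Function.Injective φ) {P : Set E} (hP : Convex 𝕜 P)
    {S : Set (ι → ℤ)} (hodd : ∀ s ∈ S, ¬Even s) (hext : ∀ s ∈ S, φ s ∈ P.extremePoints 𝕜)
    (hlat : ∀ x, φ x ∈ P → x ∈ S ∨ x = 0) :
    S.encard ≤ (2 * (2 ^ Fintype.card ι - 1) : ℕ) := by
  classical
  rw [← ZMod.card 2, ← Fintype.card_fun]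
  exact encard_le_of_eq_or_eq_neg_of_even_add (fun _ ↦ even_of_intCast_zmod_two_eq_zero) hodd
    fun s hs t ht ↦ eq_or_eq_neg_of_even_add hP hφ hext hlat hs ht

/-- A 3-dimensional terminal Fano polytope has at most 14 vertices. -/
theorem terminal_fano_polytope_card_le_14 (S : Finset (Fin 3 → ℤ))
    (hprim : ∀ s ∈ S, Int.gcd (s 0) (Int.gcd (s 1) (s 2)) = 1)
    (hzero : (0 : Fin 3 → ℝ) ∈
      interior (convexHull ℝ (latticeEmbed₃ '' (S : Set (Fin 3 → ℤ)))))
    (hext : ∀ s ∈ S, latticeEmbed₃ s ∈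
      Set.extremePoints ℝ (convexHull ℝ (latticeEmbed₃ '' (S : Set (Fin 3 → ℤ)))))
    (hlat : ∀ x : Fin 3 → ℤ,
      latticeEmbed₃ x ∈ convexHull ℝ (latticeEmbed₃ '' (S : Set (Fin 3 → ℤ))) ↔
        x ∈ S ∨ x = 0) :
    S.card ≤ 14 := by
  have hcard := terminal_fano_polytope_card_le_14_general (𝕜 := ℝ)
    (φ := (Int.castAddHom ℝ).compLeft (Fin 3)) Int.cast_injective.comp_left
    (convex_convexHull ℝ (latticeEmbed₃ '' S)) (fun s hs ↦ not_even_of_gcd_eq_one (hprim s hs))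
    hext fun x ↦ (hlat x).1
  rw [Set.encard_coe_eq_coe_finsetCard] at hcard
  exact_mod_cast hcard
end

section
/- Let S ⊂ ℤ³ be a finite set defining a 3-dimensional terminal Fano polytope, i.e.: each s ∈ S is primitive (the gcd of its coordinates is 1), the origin lies in the interior of P := convexHull ℝ S (viewing ℤ³ ⊂ ℝ³), every point of S is an extreme point of P, and P ∩ ℤ³ = S ∪ {0}. Let v ∈ ℝ³ be nonzero and c ∈ ℝ be such that P is contained in the half-space {x : ⟨v,x⟩ ≤ c} and the face F := P ∩ {x : ⟨v,x⟩ = c} is two-dimensional (the points of S lying on F affinely span a plane). Then the set S ∩ F has cardinality at most 4; i.e., every two-dimensional face of P is a triangle or a quadrangle. -/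
/-!
A face of `P` lies on a hyperplane that misses the origin, so each of its lattice points is a
vertex of `P`. Two vertices that agree modulo `2` would have a lattice point as midpoint, and that
midpoint would be a vertex too; hence the lattice points of the face are distinct modulo `2`.
Reduced modulo `2`, their differences lie in a proper subspace of `(ℤ/2)^n`: `n` integer vectors
orthogonal to a common nonzero vector have determinant `0`, hence remain dependent over `ℤ/2`.
-/

open Set Matrix Module

section Reduction

variable {ι K : Type*} [Fintype ι] [CommRing K] [IsDomain K] [CharZero K] {v : ι → K}

theorem not_linearIndependent_intCast_of_dotProduct_eq_zero (k : Type*) [Field k]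
    (hv : v ≠ 0) {f : ι → ι → ℤ} (hf : ∀ j, v ⬝ᵥ (Int.cast ∘ f j) = 0) :
    ¬ LinearIndependent k fun j ↦ (Int.cast ∘ f j : ι → k) := by
  classical
  intro hli
  let M : Matrix ι ι ℤ := .of f
  have hMv : M.map (Int.castRingHom K) *ᵥ v = 0 :=
    funext fun j ↦ (dotProduct_comm _ _).trans (hf j)
  have hdet : M.det = 0 := by
    have h := exists_mulVec_eq_zero_iff.1 ⟨v, hv, hMv⟩
    rwa [← RingHom.mapMatrix_apply, ← RingHom.map_det, eq_intCast, Int.cast_eq_zero] at h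
  have hunit : IsUnit ((Int.castRingHom k).mapMatrix M).det :=
    (isUnit_iff_isUnit_det _).1 (linearIndependent_rows_iff_isUnit.1 hli)
  rw [← RingHom.map_det, hdet, map_zero] at hunit
  exact not_isUnit_zero hunit

theorem span_intCast_ne_top_of_dotProduct_eq_zero (k : Type*) [Field k] (hv : v ≠ 0)
    {A : Set (ι → ℤ)} (hA : ∀ x ∈ A, v ⬝ᵥ (Int.cast ∘ x) = 0) :
    Submodule.span k ((fun x ↦ (Int.cast ∘ x : ι → k)) '' A) ≠ ⊤ := by
  intro htop
  obtain ⟨g, hg, -, hli⟩ := Submodule.exists_fun_fin_finrank_span_eq k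
    ((fun x ↦ (Int.cast ∘ x : ι → k)) '' A)
  have hcard : Fintype.card ι =
      finrank k (Submodule.span k ((fun x ↦ (Int.cast ∘ x : ι → k)) '' A)) := by
    rw [htop, finrank_top, finrank_fintype_fun_eq_card]
  let e := Fintype.equivFinOfCardEq hcard
  choose f hfA hfg using hg
  refine not_linearIndependent_intCast_of_dotProduct_eq_zero k hv (fun j ↦ hA _ (hfA (e j))) ?_
  simpa only [hfg, Function.comp_def] using hli.comp e e.injective

theorem encard_coe_le_natCard_pow_of_ne_top {k V : Type*} [DivisionRing k] [Finite k]
    [AddCommGroup V] [Module k V] [FiniteDimensional k V] {W : Submodule k V} (hW : W ≠ ⊤) :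
    (W : Set V).encard ≤ (Nat.card k ^ (finrank k V - 1) : ℕ) := by
  have : Finite W := Module.finite_of_finite k
  rw [← (W : Set V).toFinite.cast_ncard_eq, ← Nat.card_coe_set_eq, SetLike.coe_sort_coe,
    Module.natCard_eq_pow_finrank (K := k)]
  have hlt : finrank k W < finrank k V := Submodule.finrank_lt hW
  exact_mod_cast Nat.pow_le_pow_right Nat.card_pos (by lia)

theorem encard_image_intCast_hyperplane_le (k : Type*) [Field k] [Finite k] (hv : v ≠ 0) (c : K) :
    ((fun x ↦ (Int.cast ∘ x : ι → k)) '' {x : ι → ℤ | v ⬝ᵥ (Int.cast ∘ x) = c}).encard ≤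
      (Nat.card k ^ (Fintype.card ι - 1) : ℕ) := by
  obtain h | ⟨x₀, hx₀⟩ := {x : ι → ℤ | v ⬝ᵥ (Int.cast ∘ x) = c}.eq_empty_or_nonempty
  · simp [h]
  let red : (ι → ℤ) → ι → k := fun x ↦ Int.cast ∘ x
  let A : Set (ι → ℤ) := {x | v ⬝ᵥ (Int.cast ∘ x) = 0}
  have hsub : (· - red x₀) '' (red '' {x | v ⬝ᵥ (Int.cast ∘ x) = c}) ⊆
      Submodule.span k (red '' A) := by
    rintro _ ⟨_, ⟨x, hx, rfl⟩, rfl⟩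
    refine Submodule.subset_span ⟨x - x₀, ?_, ?_⟩
    · have hcast : (Int.cast ∘ (x - x₀) : ι → K) = Int.cast ∘ x - Int.cast ∘ x₀ := by
        ext; simp
      rw [mem_ofPred_eq] at hx hx₀ ⊢
      rw [hcast, dotProduct_sub, hx, hx₀, sub_self]
    · ext; simp [red]
  rw [← sub_left_injective.encard_image, ← finrank_fintype_fun_eq_card (R := k) (η := ι)]
  exact (encard_le_encard hsub).trans <| encard_coe_le_natCard_pow_of_ne_top <|
    span_intCast_ne_top_of_dotProduct_eq_zero k hv fun _ ↦ id

end Reduction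

theorem exists_intCast_eq_midpoint {ι : Type*} (K : Type*) [Ring K] [Invertible (2 : K)]
    {x y : ι → ℤ} (hxy : (Int.cast ∘ x : ι → ZMod 2) = Int.cast ∘ y) :
    ∃ m : ι → ℤ, (Int.cast ∘ m : ι → K) = midpoint K (Int.cast ∘ x) (Int.cast ∘ y) := by
  have heven (i : ι) : Even (x i + y i) := by
    have h : (x i : ZMod 2) = y i := congrFun hxy i
    rw [← ZMod.intCast_eq_zero_iff_even, Int.cast_add, h, CharTwo.add_self_eq_zero]
  choose m hm using heven
  refine ⟨m, funext fun i ↦ ?_⟩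
  have hsum : (x i + y i : K) = 2 * m i := by
    rw [two_mul, ← Int.cast_add, ← Int.cast_add, hm]
  simp [midpoint_eq_smul_add, hsum]

section Convex

variable {ι K : Type*} [Field K] [LinearOrder K] [IsStrictOrderedRing K]

theorem injOn_intCast_zmod_two_of_mem_extremePoints {Q : Set (ι → K)} (hQ : Convex K Q)
    (hext : ∀ x : ι → ℤ, Int.cast ∘ x ∈ Q → Int.cast ∘ x ∈ Q.extremePoints K) :
    InjOn (fun x ↦ (Int.cast ∘ x : ι → ZMod 2)) {x | (Int.cast ∘ x : ι → K) ∈ Q} := by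
  intro x hx y hy hxy
  obtain ⟨m, hm⟩ := exists_intCast_eq_midpoint K hxy
  have hmQ : midpoint K (Int.cast ∘ x) (Int.cast ∘ y) ∈ Q.extremePoints K :=
    hm ▸ hext m (hm ▸ hQ.midpoint_mem hx hy)
  obtain ⟨hxm, hym⟩ := (mem_extremePoints.1 hmQ).2 _ hx _ hy (midpoint_mem_openSegment _ _)
  exact Int.cast_injective.comp_left (hxm.trans hym.symm)

variable [Fintype ι] {v : ι → K}

theorem encard_intCast_mem_le_two_pow (hv : v ≠ 0) {c : K} {Q : Set (ι → K)}
    (hQ : Convex K Q) (hQc : ∀ x ∈ Q, v ⬝ᵥ x = c)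
    (hext : ∀ x : ι → ℤ, Int.cast ∘ x ∈ Q → Int.cast ∘ x ∈ Q.extremePoints K) :
    {x : ι → ℤ | (Int.cast ∘ x : ι → K) ∈ Q}.encard ≤ (2 ^ (Fintype.card ι - 1) : ℕ) := by
  rw [← (injOn_intCast_zmod_two_of_mem_extremePoints hQ hext).encard_image]
  have hsub : {x : ι → ℤ | (Int.cast ∘ x : ι → K) ∈ Q} ⊆ {x | v ⬝ᵥ (Int.cast ∘ x) = c} :=
    fun _ hx ↦ hQc _ hx
  refine (encard_le_encard (image_mono hsub)).trans ?_
  simpa only [Nat.card_zmod] using encard_image_intCast_hyperplane_le (ZMod 2) hv c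

end Convex

theorem apply_lt_of_mem_interior_of_forall_le {𝕜 E : Type*} [Field 𝕜] [LinearOrder 𝕜]
    [IsStrictOrderedRing 𝕜] [TopologicalSpace 𝕜] [OrderTopology 𝕜] [AddCommGroup E]
    [TopologicalSpace E] [ContinuousAdd E] [Module 𝕜 E] [ContinuousSMul 𝕜 E] {f : E →L[𝕜] 𝕜}
    (hf : f ≠ 0) {s : Set E} {c : 𝕜} (hs : ∀ x ∈ s, f x ≤ c) {x : E} (hx : x ∈ interior s) :
    f x < c := by
  have himage : f '' interior s ⊆ Iio c := by
    rw [← interior_Iic]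
    exact ((f.isOpenMap_of_ne_zero hf).image_interior_subset s).trans
      (interior_mono (image_subset_iff.2 hs))
  exact himage (mem_image_of_mem f hx)

theorem dotProduct_lt_of_mem_interior_of_forall_le {ι : Type*} [Fintype ι] {v : ι → ℝ} (hv : v ≠ 0)
    {s : Set (ι → ℝ)} {c : ℝ} (hs : ∀ x ∈ s, v ⬝ᵥ x ≤ c) {x : ι → ℝ} (hx : x ∈ interior s) :
    v ⬝ᵥ x < c := by
  classical
  let f : (ι → ℝ) →L[ℝ] ℝ := (dotProductEquiv ℝ ι v).toContinuousLinearMap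
  have hf : f ≠ 0 := by simpa [f] using hv
  exact apply_lt_of_mem_interior_of_forall_le hf hs hx

theorem terminal_fano_polytope_face_card_le_four_general {ι K : Type*} [Fintype ι] [Field K]
    [LinearOrder K] [IsStrictOrderedRing K] {P : Set (ι → K)} (hP : Convex K P)
    (hext : ∀ x : ι → ℤ, Int.cast ∘ x ∈ P → x ≠ 0 → Int.cast ∘ x ∈ P.extremePoints K)
    (v : ι → K) {c : K} (hc : c ≠ 0) :
    {x : ι → ℤ | Int.cast ∘ x ∈ P ∩ {y | v ⬝ᵥ y = c}}.encard ≤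
      (2 ^ (Fintype.card ι - 1) : ℕ) := by
  obtain rfl | hv := eq_or_ne v 0
  · simp [hc.symm]
  have hconv : Convex K (P ∩ {y | v ⬝ᵥ y = c}) :=
    hP.inter (convex_hyperplane (dotProductBilin K K v).isLinear c)
  refine encard_intCast_mem_le_two_pow hv hconv (fun _ ↦ And.right) fun x hx ↦ ?_
  have hx0 : x ≠ 0 := by
    rintro rfl
    exact hc (by simpa using hx.2.symm)
  exact inter_extremePoints_subset_extremePoints_of_subset inter_subset_left
    ⟨hx, hext x hx.1 hx0⟩

/-- Every two-dimensional face of a 3-dimensional terminal Fano polytope is a triangle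
or a quadrangle: it contains at most 4 vertices of the polytope. -/
theorem terminal_fano_polytope_face_card_le_four (S : Finset (Fin 3 → ℤ))
    (P : Set (Fin 3 → ℝ))
    (hP : P = convexHull ℝ (latticeEmbed₃ '' (S : Set (Fin 3 → ℤ))))
    (hprim : ∀ s ∈ S, Int.gcd (s 0) (Int.gcd (s 1) (s 2)) = 1)
    (hzero : (0 : Fin 3 → ℝ) ∈ interior P)
    (hext : ∀ s ∈ S, latticeEmbed₃ s ∈ Set.extremePoints ℝ P)
    (hlat : ∀ x : Fin 3 → ℤ, latticeEmbed₃ x ∈ P ↔ x ∈ S ∨ x = 0)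
    (v : Fin 3 → ℝ) (hv : v ≠ 0) (c : ℝ)
    (hsupp : ∀ x ∈ P, ∑ i, v i * x i ≤ c)
    (F : Set (Fin 3 → ℝ)) (hF : F = P ∩ {x | ∑ i, v i * x i = c})
    (hdim : Module.finrank ℝ
      ↥(vectorSpan ℝ (latticeEmbed₃ '' {s : Fin 3 → ℤ | s ∈ S ∧ latticeEmbed₃ s ∈ F})) = 2) :
    Set.ncard {s : Fin 3 → ℤ | s ∈ S ∧ latticeEmbed₃ s ∈ F} ≤ 4 := by
  have hconv : Convex ℝ P := hP ▸ convex_convexHull ℝ _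
  have hvertex (x : Fin 3 → ℤ) (hx : latticeEmbed₃ x ∈ P) (hx0 : x ≠ 0) :
      latticeEmbed₃ x ∈ P.extremePoints ℝ :=
    hext x (((hlat x).1 hx).resolve_right hx0)
  have hc : 0 < c := by
    simpa using dotProduct_lt_of_mem_interior_of_forall_le hv hsupp hzero
  have hcard := terminal_fano_polytope_face_card_le_four_general hconv hvertex v hc.ne'
  have hsub : {s | s ∈ S ∧ latticeEmbed₃ s ∈ F} ⊆
      {x | latticeEmbed₃ x ∈ P ∩ {y | v ⬝ᵥ y = c}} := fun s hs ↦ hF ▸ hs.2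
  exact (encard_le_coe_iff_finite_ncard_le.1 ((encard_le_encard hsub).trans hcard)).2
end

section
/- Let G be a finite subgroup of GL(3,ℤ), the group of invertible 3×3 integer matrices, and let n be a natural number with 5 ≤ n ≤ 14 such that n divides the order of G. Then n = 6, n = 8, or n = 12. -/
/-!
Minkowski: for an odd prime `p`, reduction modulo `p` is injective on every finite subgroup of
`GL(n, ℤ)`. It suffices to exclude a matrix `x = 1 + p N ≠ 1` with `x ^ ℓ = 1` and `ℓ` prime.
Since `(1 + x + ⋯ + x ^ (ℓ - 1)) (x - 1) = 0`, the geometric sum would have determinant `0`. But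
that determinant is nonzero: if `ℓ ≠ p`, the sum is congruent to `ℓ`, hence invertible, modulo `p`;
if `ℓ = p`, the sum is `p` times a matrix congruent to `1` modulo `p`.

Hence the order of a finite subgroup of `GL(3, ℤ)` divides both `|GL(3, 𝔽₃)| = 2⁵ · 3³ · 13` and
`|GL(3, 𝔽₅)| = 2⁷ · 3 · 5³ · 31`, so it divides their greatest common divisor `96`.
-/

open Finset Matrix

theorem exists_geom_sum_one_add_natCast_mul_eq {A : Type*} [Ring A] {p : ℕ} (hp : Odd p) (b : A) :
    ∃ c : A, ∑ i ∈ range p, (1 + p * b) ^ i = p * (1 + p * c) := by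
  -- `b` commutes with everything in sight, so the identity may be proved in `ℤ[X]` at `X`.
  obtain ⟨q, hq⟩ := odd_sq_dvd_geom_sum₂_sub (1 : Polynomial ℤ) Polynomial.X hp
  refine ⟨Polynomial.aeval b q, ?_⟩
  have h := congrArg (Polynomial.aeval b) (sub_eq_iff_eq_add.mp hq)
  simp only [one_pow, mul_one, map_sum, map_pow, map_add, map_one, map_mul, map_natCast,
    Polynomial.aeval_X] at h
  rw [h]
  noncomm_ring

section CommRing

variable {n R S : Type*} [Fintype n] [DecidableEq n] [CommRing R] [CommRing S]

theorem det_natCast_matrix (m : ℕ) : (m : Matrix n n R).det = (m : R) ^ Fintype.card n := by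
  rw [← diagonal_natCast, det_diagonal, prod_const, card_univ]

theorem matrix_eq_one_of_pow_eq_one_of_isLeftRegular_det_geom_sum {x : Matrix n n R} {m : ℕ}
    (hpow : x ^ m = 1) (hdet : IsLeftRegular (∑ i ∈ range m, x ^ i).det) : x = 1 := by
  refine sub_eq_zero.mp ((isRegular_of_isLeftRegular_det hdet).left ?_)
  simp only [geom_sum_mul, hpow, sub_self, mul_zero]

theorem det_ne_zero_of_det_map_ne_zero (φ : R →+* S) {A : Matrix n n R}
    (hA : (φ.mapMatrix A).det ≠ 0) : A.det ≠ 0 :=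
  fun h => hA (by rw [← RingHom.map_det, h, map_zero])

theorem det_geom_sum_ne_zero_of_isUnit [Nontrivial S] (φ : R →+* S) {x : Matrix n n R}
    (hx : φ.mapMatrix x = 1) {m : ℕ} (hm : IsUnit (m : S)) :
    (∑ i ∈ range m, x ^ i).det ≠ 0 := by
  refine det_ne_zero_of_det_map_ne_zero φ ?_
  simp only [map_sum, map_pow, hx, one_pow, sum_const, card_range, nsmul_one, det_natCast_matrix]
  exact (hm.pow _).ne_zero

theorem det_geom_sum_one_add_natCast_mul_ne_zero [IsDomain R] [CharZero R] [Nontrivial S]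
    (φ : R →+* S) {p : ℕ} (hp : Odd p) (hpS : (p : S) = 0) (N : Matrix n n R) :
    (∑ i ∈ range p, (1 + p * N) ^ i).det ≠ 0 := by
  obtain ⟨C, hC⟩ := exists_geom_sum_one_add_natCast_mul_eq hp N
  have hpR : (p : R) ≠ 0 := Nat.cast_ne_zero.mpr hp.pos.ne'
  have hpMat : (p : Matrix n n S) = 0 := by rw [← diagonal_natCast, hpS, diagonal_zero]
  have hdetC : (1 + p * C).det ≠ 0 := by
    refine det_ne_zero_of_det_map_ne_zero φ ?_
    rw [map_add, map_one, map_mul, map_natCast, hpMat, zero_mul, add_zero, det_one]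
    exact one_ne_zero
  rw [hC, det_mul, det_natCast_matrix]
  exact mul_ne_zero (pow_ne_zero _ hpR) hdetC

variable {φ : R →+* S} {p : ℕ}

theorem exists_eq_one_add_natCast_mul_of_map_eq_one (hφ : RingHom.ker φ = Ideal.span {(p : R)})
    {x : Matrix n n R} (hx : φ.mapMatrix x = 1) : ∃ N : Matrix n n R, x = 1 + p * N := by
  have hsub : φ.mapMatrix (x - 1) = 0 := by rw [map_sub, hx, map_one, sub_self]
  have hdvd (i j : n) : (p : R) ∣ (x - 1) i j := by
    rw [← Ideal.mem_span_singleton, ← hφ]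
    exact congrFun₂ hsub i j
  choose N hN using hdvd
  refine ⟨of N, sub_eq_iff_eq_add'.mp ?_⟩
  ext i j
  rw [hN, ← diagonal_natCast, diagonal_mul, of_apply]

variable [IsDomain R] [CharZero R] [CharP S p]

theorem matrix_eq_one_of_pow_prime_eq_one_of_map_eq_one (hp : p.Prime) (hodd : Odd p)
    (hφ : RingHom.ker φ = Ideal.span {(p : R)}) {x : Matrix n n R}
    (hx : φ.mapMatrix x = 1) {ℓ : ℕ} (hℓ : ℓ.Prime) (hpow : x ^ ℓ = 1) : x = 1 := by
  have : Nontrivial S := CharP.nontrivial_of_char_ne_one hp.ne_one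
  refine matrix_eq_one_of_pow_eq_one_of_isLeftRegular_det_geom_sum hpow
    (IsLeftCancelMulZero.mul_left_cancel_of_ne_zero ?_)
  by_cases hpℓ : p = ℓ
  · subst hpℓ
    obtain ⟨N, rfl⟩ := exists_eq_one_add_natCast_mul_of_map_eq_one hφ hx
    exact det_geom_sum_one_add_natCast_mul_ne_zero φ hodd (CharP.cast_eq_zero S p) N
  · refine det_geom_sum_ne_zero_of_isUnit φ hx ((CharP.isUnit_natCast_iff hp).mpr ?_)
    rwa [Nat.prime_dvd_prime_iff_eq hp hℓ]

theorem matrix_eq_one_of_pow_eq_one_of_map_eq_one (hp : p.Prime) (hodd : Odd p)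
    (hφ : RingHom.ker φ = Ideal.span {(p : R)}) {x : Matrix n n R}
    (hx : φ.mapMatrix x = 1) {m : ℕ} (hm : m ≠ 0) (hpow : x ^ m = 1) : x = 1 := by
  induction m using Nat.recOnMul generalizing x with
  | zero => exact absurd rfl hm
  | one => rwa [pow_one] at hpow
  | prime ℓ hℓ => exact matrix_eq_one_of_pow_prime_eq_one_of_map_eq_one hp hodd hφ hx hℓ hpow
  | mul a b iha ihb =>
    refine iha hx (left_ne_zero_of_mul hm) (ihb ?_ (right_ne_zero_of_mul hm) ?_)
    · rw [map_pow, hx, one_pow]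
    · rw [← pow_mul, hpow]

theorem injective_GL_map_comp_subtype_of_isMulTorsion (hp : p.Prime) (hodd : Odd p)
    (hφ : RingHom.ker φ = Ideal.span {(p : R)}) {G : Subgroup (GL n R)}
    (hG : IsMulTorsion G) :
    Function.Injective ((GeneralLinearGroup.map φ).comp G.subtype) := by
  rw [injective_iff_map_eq_one]
  intro g hg
  obtain ⟨m, hm, hpow⟩ := (hG g).exists_pow_eq_one
  have hpow' : (g : GL n R).val ^ m = 1 := congrArg (fun h : G => (h : GL n R).val) hpow
  exact Subtype.ext <| Units.ext <| matrix_eq_one_of_pow_eq_one_of_map_eq_one hp hodd hφ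
    (congrArg Units.val hg) hm.ne' hpow'

end CommRing

theorem card_dvd_card_GL_zmod {n : Type*} [Fintype n] [DecidableEq n] (G : Subgroup (GL n ℤ))
    [Finite G] {p : ℕ} (hp : p.Prime) (hodd : Odd p) :
    Nat.card G ∣ Nat.card (GL n (ZMod p)) :=
  Subgroup.card_dvd_of_injective _ <| injective_GL_map_comp_subtype_of_isMulTorsion hp hodd
    (ZMod.ker_intCastRingHom p) isMulTorsion_of_finite

theorem card_finite_subgroup_GL3Z_dvd_96 (G : Subgroup (GL (Fin 3) ℤ)) [Finite G] :
    Nat.card G ∣ 96 := by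
  have : Fact (Nat.Prime 5) := ⟨by norm_num⟩
  have h3 := card_dvd_card_GL_zmod G Nat.prime_three (by decide)
  have h5 := card_dvd_card_GL_zmod G Nat.prime_five (by decide)
  rw [card_GL_field, ZMod.card, Fin.prod_univ_three] at h3 h5
  exact Nat.dvd_gcd h3 h5

/-- If `n` with `5 ≤ n ≤ 14` divides the order of a finite subgroup of `GL(3,ℤ)`,
then `n = 6`, `n = 8` or `n = 12`. -/
theorem divisor_of_finite_subgroup_GL3Z
    (G : Subgroup (Matrix.GeneralLinearGroup (Fin 3) ℤ)) (hG : Finite G)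
    (n : ℕ) (h5 : 5 ≤ n) (h14 : n ≤ 14) (hdvd : n ∣ Nat.card G) :
    n = 6 ∨ n = 8 ∨ n = 12 := by
  have h96 : n ∣ 96 := hdvd.trans (card_finite_subgroup_GL3Z_dvd_96 G)
  interval_cases n <;> omega
end

section
/- Every subgroup of order 3 of GL(3,ℤ) is conjugate in GL(3,ℤ) to exactly one of the two subgroups W₁ = ⟨A₁⟩ and W₂ = ⟨A₂⟩, where A₁ is the matrix with rows (1,0,0), (0,0,−1), (0,1,−1) and A₂ is the cyclic permutation matrix with rows (0,1,0), (0,0,1), (1,0,0); moreover W₁ and W₂ are not conjugate to each other. -/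
/-- The matrix with rows `(1,0,0)`, `(0,0,-1)`, `(0,1,-1)`, as an element of `GL(3,ℤ)`.
Its inverse is its square, since it has order 3. -/
def genA₁ : Matrix.GeneralLinearGroup (Fin 3) ℤ :=
  ⟨!![1,0,0; 0,0,-1; 0,1,-1], !![1,0,0; 0,0,-1; 0,1,-1] * !![1,0,0; 0,0,-1; 0,1,-1],
    by decide, by decide⟩

/-- The cyclic permutation matrix with rows `(0,1,0)`, `(0,0,1)`, `(1,0,0)`, as an element
of `GL(3,ℤ)`.  Its inverse is its square. -/
def genA₂ : Matrix.GeneralLinearGroup (Fin 3) ℤ :=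
  ⟨!![0,1,0; 0,0,1; 1,0,0], !![0,1,0; 0,0,1; 1,0,0] * !![0,1,0; 0,0,1; 1,0,0],
    by decide, by decide⟩

/-- Two subgroups of `GL(3,ℤ)` are conjugate if one maps onto the other under
conjugation by some element. -/
def IsConjSubgroup (H K : Subgroup (Matrix.GeneralLinearGroup (Fin 3) ℤ)) : Prop :=
  ∃ g : Matrix.GeneralLinearGroup (Fin 3) ℤ,
    Subgroup.map (MulAut.conj g).toMonoidHom H = K

/-!
In odd dimension a matrix `A` with `A³ = 1` over an ordered ring fixes a nonzero vector: otherwise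
`A² + A + 1 = 0`, so `(2A + 1)² = -3`, which is impossible by taking determinants. Over `ℤ` the
fixed vector may be taken to be part of a basis, so `A` is conjugate to a block matrix with
diagonal blocks `1` and `B`, where `B² + B + 1 = 0` if `A ≠ 1`. Reduction of the binary quadratic
form of discriminant `-3` attached to `B` shows that `B` is conjugate to multiplication by a
primitive cube root of unity `ω` on `ℤ[ω]`. The remaining row vector matters only modulo the image
of `ω - 1`, of index `3`, and up to sign, which leaves two classes. Reduction modulo `3` separates
the subgroups they generate.
-/

open Matrix Pointwise

section Monoid

variable {M : Type*} [Monoid M]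

lemma isConj_of_semiconjBy {a b c : M} (hc : IsUnit c) (h : SemiconjBy c a b) : IsConj a b :=
  ⟨hc.unit, h⟩

lemma isConj_units_val_iff {a b : Mˣ} : IsConj (a : M) (b : M) ↔ IsConj a b := by
  refine ⟨fun ⟨c, hc⟩ => isConj_of_semiconjBy (Group.isUnit c) (Units.ext hc), fun h => ?_⟩
  exact (Units.coeHom M).map_isConj h

end Monoid

section Ring

variable {R : Type*} [Ring R]

lemma eq_zero_of_semiconjBy_zero {c : Rˣ} {y : R} (h : SemiconjBy (c : R) 0 y) : y = 0 := by
  rwa [SemiconjBy, mul_zero, eq_comm, Units.mul_left_eq_zero] at h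

lemma sub_one_pow_eq_zero_of_isConj {x y : R} (h : IsConj x y) {n : ℕ} (hx : (x - 1) ^ n = 0) :
    (y - 1) ^ n = 0 := by
  obtain ⟨c, hc⟩ := h
  exact eq_zero_of_semiconjBy_zero (hx ▸ (hc.sub_right (SemiconjBy.one_right _)).pow_right n)

lemma sq_add_self_add_one_eq_zero_of_isConj {x y : R} (h : IsConj x y) (hx : x ^ 2 + x + 1 = 0) :
    y ^ 2 + y + 1 = 0 := by
  obtain ⟨c, hc⟩ := h
  exact eq_zero_of_semiconjBy_zero
    (hx ▸ ((hc.pow_right 2).add_right hc).add_right (SemiconjBy.one_right _))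

lemma pow_sub_one_pow_eq_zero {x : R} {n : ℕ} (hx : (x - 1) ^ n = 0) (k : ℕ) :
    (x ^ k - 1) ^ n = 0 := by
  have hcomm : Commute (x - 1) (∑ i ∈ Finset.range k, x ^ i) :=
    Commute.sum_right _ _ _ fun i _ => ((Commute.refl x).pow_right i).sub_left (Commute.one_left _)
  rw [← mul_geom_sum, hcomm.mul_pow, hx, zero_mul]

lemma eq_one_of_pow_eq_one_of_sub_one_sq_eq_zero [IsAddTorsionFree R] {x : R} {k : ℕ}
    (hk : k ≠ 0) (hpow : x ^ k = 1) (hx : (x - 1) ^ 2 = 0) : x = 1 := by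
  have hfix : ∀ i, (x - 1) * x ^ i = x - 1 := by
    intro i
    induction i with
    | zero => rw [pow_zero, mul_one]
    | succ i ih => rw [pow_succ, ← mul_assoc, ih, ← sub_eq_zero, ← mul_sub_one, ← sq, hx]
  have hgeom := mul_geom_sum x k
  simp only [Finset.mul_sum, hfix, Finset.sum_const, Finset.card_range, hpow, sub_self] at hgeom
  exact sub_eq_zero.mp ((nsmul_eq_zero_iff_right hk).mp hgeom)

end Ring

section CubeRoots

variable {R n : Type*} [CommRing R] [Fintype n] [DecidableEq n]

lemma sq_add_self_add_one_eq_zero_of_det_sub_one_ne_zero [IsDomain R] {A : Matrix n n R}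
    (h3 : A ^ 3 = 1) (hdet : (A - 1).det ≠ 0) : A ^ 2 + A + 1 = 0 := by
  have hfactor : (A - 1) * (A ^ 2 + A + 1) = A ^ 3 - 1 := by noncomm_ring
  rw [h3, sub_self] at hfactor
  have hreg : IsLeftRegular (A - 1) :=
    (isRegular_of_isLeftRegular_det (IsRegular.of_ne_zero hdet).left).left
  exact hreg.mul_left_eq_zero_iff.mp hfactor

variable [LinearOrder R] [IsStrictOrderedRing R]

-- Taking determinants in `(2A + 1)² = -3` would make a power of `-3` with odd exponent a square.
lemma sq_add_self_add_one_ne_zero_of_odd_card (hn : Odd (Fintype.card n)) (A : Matrix n n R) :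
    A ^ 2 + A + 1 ≠ 0 := by
  intro hA
  have hsq : (2 * A + 1) ^ 2 = (-3 : R) • (1 : Matrix n n R) := by
    have hcomplete : (2 * A + 1) ^ 2 = 4 * (A ^ 2 + A + 1) + (-3 : ℤ) • 1 := by noncomm_ring
    rw [hcomplete, hA, mul_zero, zero_add, ← Int.cast_smul_eq_zsmul R, Int.cast_neg, Int.cast_ofNat]
  have hdet : (2 * A + 1).det ^ 2 = (-3) ^ Fintype.card n := by
    rw [← det_pow, hsq, det_smul, det_one, mul_one]
  have hneg : (-3 : R) ^ Fintype.card n < 0 := hn.pow_neg (by norm_num)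
  exact (sq_nonneg _).not_gt (hdet ▸ hneg)

lemma det_sub_one_eq_zero_of_pow_three_eq_one (hn : Odd (Fintype.card n)) {A : Matrix n n R}
    (h3 : A ^ 3 = 1) : (A - 1).det = 0 := by
  by_contra hdet
  exact sq_add_self_add_one_ne_zero_of_odd_card hn A
    (sq_add_self_add_one_eq_zero_of_det_sub_one_ne_zero h3 hdet)

lemma sq_add_self_add_one_eq_zero_of_ne_one {B : Matrix (Fin 2) (Fin 2) R}
    (h3 : B ^ 3 = 1) (h1 : B ≠ 1) : B ^ 2 + B + 1 = 0 := by
  refine sq_add_self_add_one_eq_zero_of_det_sub_one_ne_zero h3 fun hdet => h1 ?_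
  have hdetB : B.det = 1 := by
    have hpow : B.det ^ 3 = 1 ^ 3 := by rw [← det_pow, h3, det_one, one_pow]
    exact (Odd.strictMono_pow (by decide)).injective hpow
  have htrace : B.trace = 2 := by
    simp only [det_fin_two, Matrix.sub_apply, one_apply_eq, ne_eq, zero_ne_one, one_ne_zero,
      not_false_eq_true, one_apply_ne, sub_zero] at hdet hdetB
    rw [trace_fin_two]
    linear_combination hdetB - hdet
  have hunipotent : (B - 1) ^ 2 = 0 := by
    have hcayley := aeval_self_charpoly B
    rw [charpoly_fin_two, hdetB, htrace] at hcayley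
    simp only [map_add, map_sub, map_mul, map_pow, Polynomial.aeval_X, map_ofNat,
      map_one] at hcayley
    rw [← hcayley]
    noncomm_ring
  have : IsAddTorsionFree R := inferInstance
  have : IsAddTorsionFree (Matrix (Fin 2) (Fin 2) R) :=
    inferInstanceAs (IsAddTorsionFree (Fin 2 → Fin 2 → R))
  exact eq_one_of_pow_eq_one_of_sub_one_sq_eq_zero three_ne_zero h3 hunipotent

end CubeRoots

section Bordered

variable {R : Type*} [CommRing R] {n : ℕ}

/-- The block upper triangular matrix with diagonal blocks `1` and `B` and upper right block the
row vector `u`, that is, the general shape of a matrix fixing the first standard basis vector. -/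
def bordered (u : Fin n → R) (B : Matrix (Fin n) (Fin n) R) :
    Matrix (Fin (n + 1)) (Fin (n + 1)) R :=
  of (vecCons (vecCons 1 u) fun i => vecCons 0 (B i))

lemma bordered_inj {u v : Fin n → R} {B C : Matrix (Fin n) (Fin n) R} :
    bordered u B = bordered v C ↔ u = v ∧ B = C := by
  refine ⟨fun h => ⟨?_, ?_⟩, fun ⟨hu, hB⟩ => by rw [hu, hB]⟩
  · ext j
    simpa [bordered] using congrFun₂ h 0 j.succ
  · ext i j
    simpa [bordered] using congrFun₂ h i.succ j.succ

lemma bordered_zero_one : bordered (0 : Fin n → R) 1 = 1 := by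
  ext i j
  cases i using Fin.cases <;> cases j using Fin.cases <;>
    simp [bordered, one_apply, Fin.succ_ne_zero, (Fin.succ_ne_zero _).symm]

lemma bordered_mul (u v : Fin n → R) (B C : Matrix (Fin n) (Fin n) R) :
    bordered u B * bordered v C = bordered (v + u ᵥ* C) (B * C) := by
  ext i j
  cases i using Fin.cases <;> cases j using Fin.cases <;>
    simp [bordered, mul_apply, vecMul, dotProduct, Fin.sum_univ_succ]

lemma bordered_pow (u : Fin n → R) (B : Matrix (Fin n) (Fin n) R) (k : ℕ) :
    bordered u B ^ k = bordered (∑ i ∈ Finset.range k, u ᵥ* B ^ i) (B ^ k) := by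
  induction k with
  | zero => rw [pow_zero, pow_zero, Finset.sum_range_zero, bordered_zero_one]
  | succ k ih => rw [pow_succ', ih, bordered_mul, ← pow_succ', Finset.sum_range_succ]

lemma det_bordered (u : Fin n → R) (B : Matrix (Fin n) (Fin n) R) :
    (bordered u B).det = B.det := by
  have hminor : (bordered u B).submatrix (Fin.succAbove 0) Fin.succ = B := by
    ext i j
    simp [bordered]
  rw [det_succ_column_zero, Fin.sum_univ_succ, hminor]
  simp [bordered]

lemma isUnit_bordered {u : Fin n → R} {B : Matrix (Fin n) (Fin n) R} (hB : IsUnit B) :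
    IsUnit (bordered u B) := by
  rw [isUnit_iff_isUnit_det, det_bordered]
  exact (isUnit_iff_isUnit_det B).mp hB

lemma eq_bordered_of_col_zero {A : Matrix (Fin (n + 1)) (Fin (n + 1)) R}
    (hA : A.col 0 = Pi.single 0 1) : ∃ u B, A = bordered u B := by
  refine ⟨fun j => A 0 j.succ, A.submatrix Fin.succ Fin.succ, ?_⟩
  ext i j
  cases j using Fin.cases with
  | zero =>
    rw [← col_apply A, hA]
    cases i using Fin.cases <;> simp [bordered]
  | succ j => cases i using Fin.cases <;> simp [bordered]

lemma pow_eq_one_of_bordered {u : Fin n → R} {B : Matrix (Fin n) (Fin n) R} {k : ℕ}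
    (h : bordered u B ^ k = 1) : B ^ k = 1 := by
  rw [bordered_pow, ← bordered_zero_one, bordered_inj] at h
  exact h.2

lemma ne_one_of_bordered_ne_one [IsAddTorsionFree R] {u : Fin n → R}
    {B : Matrix (Fin n) (Fin n) R} {k : ℕ} (hk : k ≠ 0) (h : bordered u B ^ k = 1)
    (h1 : bordered u B ≠ 1) : B ≠ 1 := by
  rintro rfl
  rw [bordered_pow, ← bordered_zero_one, bordered_inj] at h
  have hu : k • u = 0 := by
    simpa only [one_pow, vecMul_one, Finset.sum_const, Finset.card_range] using h.1
  exact h1 (by rw [(nsmul_eq_zero_iff_right hk).mp hu, bordered_zero_one])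

lemma exists_isConj_bordered {B C : Matrix (Fin n) (Fin n) R} (u : Fin n → R) (h : IsConj B C) :
    ∃ v, IsConj (bordered u B) (bordered v C) := by
  obtain ⟨P, hP⟩ := h
  refine ⟨u ᵥ* (P⁻¹).val, isConj_of_semiconjBy (isUnit_bordered (u := 0) P.isUnit) ?_⟩
  rw [SemiconjBy, bordered_mul, bordered_mul, vecMul_vecMul, P.inv_mul, hP.eq]
  simp only [zero_vecMul, vecMul_one, add_zero, zero_add]

lemma isConj_bordered_add_sub_vecMul (u w : Fin n → R) (B : Matrix (Fin n) (Fin n) R) :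
    IsConj (bordered u B) (bordered (u + w ᵥ* B - w) B) := by
  refine isConj_of_semiconjBy (isUnit_bordered (u := w) isUnit_one) ?_
  rw [SemiconjBy, bordered_mul, bordered_mul]
  simp only [one_mul, mul_one, vecMul_one, add_sub_cancel]

end Bordered

section FixedVector

variable {R : Type*} [CommRing R] [IsDomain R] [IsPrincipalIdealRing R]

lemma exists_basis_apply_eq_zero {ι M N : Type*} [Finite ι] [AddCommGroup M] [Module R M]
    [AddCommGroup N] [Module R N] [Module.IsTorsionFree R N] (b : Module.Basis ι R M)
    {f : M →ₗ[R] N} (hf : LinearMap.ker f ≠ ⊥) (j : ι) :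
    ∃ b' : Module.Basis ι R M, f (b' j) = 0 := by
  classical
  obtain ⟨m, bM, bN, g, a, hsnf⟩ := (LinearMap.ker f).smithNormalForm b
  have : Nontrivial (LinearMap.ker f) := Submodule.nontrivial_iff_ne_bot.mpr hf
  obtain ⟨i⟩ := bN.index_nonempty
  have ha : a i ≠ 0 := by
    intro ha
    apply bN.ne_zero i
    rw [← Submodule.coe_eq_zero, hsnf, ha, zero_smul]
  have hker : a i • f (bM (g i)) = 0 := by
    rw [← map_smul, ← hsnf]
    exact (bN i).2
  refine ⟨bM.reindex (Equiv.swap (g i) j), ?_⟩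
  simpa [ha] using hker

lemma exists_isConj_bordered_of_det_sub_one_eq_zero {n : ℕ}
    {A : Matrix (Fin (n + 1)) (Fin (n + 1)) R} (hA : (A - 1).det = 0) :
    ∃ u B, IsConj A (bordered u B) := by
  let e := Pi.basisFun R (Fin (n + 1))
  have hker : LinearMap.ker (toLin' (A - 1)) ≠ ⊥ := by
    rw [← LinearMap.det_eq_zero_iff_ker_ne_bot, LinearMap.det_toLin', hA]
  obtain ⟨b, hb⟩ := exists_basis_apply_eq_zero e hker 0
  have hfix : toLin' A (b 0) = b 0 := by
    rwa [map_sub, LinearMap.sub_apply, toLin'_one, LinearMap.id_apply, sub_eq_zero] at hb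
  let A' := LinearMap.toMatrix b b (toLin' A)
  have hconj : IsConj A' A := by
    have := e.invertibleToMatrix b
    refine isConj_of_semiconjBy (isUnit_of_invertible (e.toMatrix b)) ?_
    have hA : LinearMap.toMatrix e e (toLin' A) = A := LinearMap.toMatrix'_toLin' A
    rw [SemiconjBy, basis_toMatrix_mul_linearMap_toMatrix, ← hA,
      linearMap_toMatrix_mul_basis_toMatrix, hA]
  have hcol : A'.col 0 = Pi.single 0 1 := by
    ext i
    simp only [A', col_apply, LinearMap.toMatrix_apply, hfix, b.repr_self,
      Finsupp.single_eq_pi_single]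
  obtain ⟨u, B, hB⟩ := eq_bordered_of_col_zero hcol
  exact ⟨u, B, hB ▸ hconj.symm⟩

end FixedVector

section Eisenstein

/-- The companion matrix of `X ^ 2 + X + 1`: multiplication by a primitive cube root of unity `ω`
on `R[ω]`, in the basis `1, ω`. -/
def eisensteinMatrix (R : Type*) [CommRing R] : Matrix (Fin 2) (Fin 2) R :=
  !![0, -1; 1, -1]

section CommRing

variable {R : Type*} [CommRing R] {B : Matrix (Fin 2) (Fin 2) R}

lemma entries_of_sq_add_self_add_one_eq_zero (hB : B ^ 2 + B + 1 = 0) :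
    B 0 0 ^ 2 + B 0 0 + 1 + B 0 1 * B 1 0 = 0 ∧ B 1 0 * (B 0 0 + B 1 1 + 1) = 0 := by
  have h00 := congrFun₂ hB 0 0
  have h10 := congrFun₂ hB 1 0
  simp only [sq, Matrix.add_apply, mul_apply, Fin.sum_univ_two, one_apply_eq, Matrix.zero_apply,
    ne_eq, one_ne_zero, not_false_eq_true, one_apply_ne, add_zero] at h00 h10
  exact ⟨by linear_combination h00, by linear_combination h10⟩

-- The first standard basis vector and its image under `B` form a basis.
lemma isConj_eisensteinMatrix_of_isUnit (hB : B ^ 2 + B + 1 = 0) (hunit : IsUnit (B 1 0)) :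
    IsConj B (eisensteinMatrix R) := by
  have hP : IsUnit !![1, B 0 0; 0, B 1 0] := by
    rw [isUnit_iff_isUnit_det, det_fin_two_of]
    simpa using hunit
  refine (isConj_of_semiconjBy hP ?_).symm
  obtain ⟨h00, h10⟩ := entries_of_sq_add_self_add_one_eq_zero hB
  rw [SemiconjBy, eisensteinMatrix]
  ext i j
  fin_cases i <;> fin_cases j <;>
    simp only [Fin.zero_eta, Fin.mk_one, mul_apply, of_apply, cons_val', cons_val_fin_one,
      cons_val_zero, cons_val_one, Fin.sum_univ_two]
  · ring
  · linear_combination -h00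
  · ring
  · linear_combination -h10

end CommRing

lemma exists_abs_two_mul_mul_add_le (c : ℤ) {r : ℤ} (hr : r ≠ 0) :
    ∃ k : ℤ, |2 * r * k + c| ≤ |r| := by
  refine ⟨-((c + |r|) / (2 * r)), ?_⟩
  have hmod := Int.emod_add_mul_ediv (c + |r|) (2 * r)
  have hnonneg := Int.emod_nonneg (c + |r|) (mul_ne_zero two_ne_zero hr)
  have hlt := Int.emod_lt_abs (c + |r|) (mul_ne_zero two_ne_zero hr)
  rw [abs_mul, abs_two] at hlt
  rw [abs_le]
  constructor <;> linarith

variable {B : Matrix (Fin 2) (Fin 2) ℤ}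

-- Gauss reduction: the lower left entry of a conjugate `P⁻¹ * B * P` is, up to sign, the value of
-- a binary quadratic form of discriminant `-3` at the first column of `P`.
lemma exists_isConj_natAbs_lt (hB : B ^ 2 + B + 1 = 0) (hunit : ¬ IsUnit (B 1 0)) :
    ∃ B', IsConj B B' ∧ (B' 1 0).natAbs < (B 1 0).natAbs := by
  obtain ⟨h00, h10⟩ := entries_of_sq_add_self_add_one_eq_zero hB
  set r := B 1 0 with hr
  have hr0 : r ≠ 0 := by
    intro hr0
    rw [hr0] at h00
    nlinarith [sq_nonneg (2 * B 0 0 + 1)]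
  have hr1 : 1 < |r| :=
    lt_of_le_of_ne (Int.one_le_abs hr0) fun h => hunit (Int.isUnit_iff_abs_eq.mpr h.symm)
  obtain ⟨k, hk⟩ := exists_abs_two_mul_mul_add_le (-(2 * B 0 0 + 1)) hr0
  let P : Matrix (Fin 2) (Fin 2) ℤ := !![k, -1; 1, 0]
  let Q : Matrix (Fin 2) (Fin 2) ℤ := !![0, 1; -1, k]
  have hPQ : P * Q = 1 := by simp [P, Q, one_fin_two]
  let B' := Q * B * P
  have hconj : SemiconjBy P B' B := by
    rw [SemiconjBy, ← mul_assoc, ← mul_assoc, hPQ, one_mul]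
  refine ⟨B', (isConj_of_semiconjBy (IsUnit.of_mul_eq_one Q hPQ) hconj).symm, ?_⟩
  have hform : 4 * r * B' 1 0 = (2 * r * k + -(2 * B 0 0 + 1)) ^ 2 + 3 := by
    have hentry : B' 1 0 = r * k ^ 2 + (B 1 1 - B 0 0) * k - B 0 1 := by
      simp only [B', P, Q, hr, mul_apply, Fin.sum_univ_two, of_apply, cons_val', cons_val_zero,
        cons_val_one, cons_val_fin_one]
      ring
    rw [hentry]
    linear_combination 4 * k * h10 - 4 * h00
  have habs : 4 * (|r| * |B' 1 0|) ≤ |r| ^ 2 + 3 := by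
    rw [← abs_mul, ← abs_of_pos (four_pos : (0 : ℤ) < 4), ← abs_mul, ← mul_assoc, hform,
      abs_of_pos (by positivity)]
    linarith [sq_le_sq.mpr hk, sq_abs r]
  zify
  nlinarith

lemma isConj_eisensteinMatrix (hB : B ^ 2 + B + 1 = 0) : IsConj B (eisensteinMatrix ℤ) := by
  induction hr : (B 1 0).natAbs using Nat.strong_induction_on generalizing B with
  | _ r ih =>
    by_cases hunit : IsUnit (B 1 0)
    · exact isConj_eisensteinMatrix_of_isUnit hB hunit
    · obtain ⟨B', hconj, hlt⟩ := exists_isConj_natAbs_lt hB hunit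
      exact hconj.trans (ih _ (hr ▸ hlt) (sq_add_self_add_one_eq_zero_of_isConj hconj hB) rfl)

-- The image of `eisensteinMatrix ℤ - 1` has index `3`.
lemma exists_isConj_bordered_eisensteinMatrix (u : Fin 2 → ℤ) :
    ∃ e : ℤ, (e = 0 ∨ IsUnit e) ∧
      IsConj (bordered u (eisensteinMatrix ℤ)) (bordered ![e, 0] (eisensteinMatrix ℤ)) := by
  obtain ⟨k, hk⟩ : ∃ k, u 0 - u 1 + 3 * k = 0 ∨ IsUnit (u 0 - u 1 + 3 * k) :=
    ⟨-((u 0 - u 1 + 1) / 3), by rw [Int.isUnit_iff]; omega⟩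
  refine ⟨_, hk, ?_⟩
  convert isConj_bordered_add_sub_vecMul u ![u 1 - 2 * k, k] (eisensteinMatrix ℤ) using 2
  ext j
  fin_cases j <;>
    simp only [Fin.zero_eta, Fin.mk_one, cons_val_zero, cons_val_one, cons_val_fin_one,
      eisensteinMatrix, vecMul, dotProduct, Fin.sum_univ_two, of_apply, cons_val', Pi.add_apply,
      Pi.sub_apply] <;>
    ring

end Eisenstein

section Classification

lemma genA₁_val : (genA₁ : Matrix (Fin 3) (Fin 3) ℤ) = bordered ![0, 0] (eisensteinMatrix ℤ) := by
  decide

-- The vector `(1, 1, 1)`, fixed by the permutation matrix, is the first column of `P`.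
lemma isConj_bordered_genA₂ {e : ℤ} (he : IsUnit e) :
    IsConj (bordered ![e, 0] (eisensteinMatrix ℤ)) (genA₂ : Matrix (Fin 3) (Fin 3) ℤ) := by
  let P : Matrix (Fin 3) (Fin 3) ℤ := !![1, 0, 0; 1, e, 0; 1, e, -e]
  have hP : IsUnit P := by
    rw [isUnit_iff_isUnit_det]
    simpa [P, det_fin_three] using he
  refine isConj_of_semiconjBy hP ?_
  rw [SemiconjBy]
  ext i j
  fin_cases i <;> fin_cases j <;>
    simp [P, genA₂, bordered, eisensteinMatrix, mul_apply, Fin.sum_univ_three]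

lemma isConj_genA₁_or_isConj_genA₂ {A : GL (Fin 3) ℤ} (h3 : A ^ 3 = 1) (h1 : A ≠ 1) :
    IsConj A genA₁ ∨ IsConj A genA₂ := by
  have hA3 : A.val ^ 3 = 1 := by rw [← Units.val_pow_eq_pow_val, h3, Units.val_one]
  obtain ⟨u, B, hAB⟩ := exists_isConj_bordered_of_det_sub_one_eq_zero
    (det_sub_one_eq_zero_of_pow_three_eq_one (by decide) hA3)
  have hbordered3 : bordered u B ^ 3 = 1 := isConj_one_right.mp (hA3 ▸ hAB.pow 3)
  have hbordered1 : bordered u B ≠ 1 := fun h => h1 (Units.ext (isConj_one_left.mp (h ▸ hAB)))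
  have hB : B ^ 2 + B + 1 = 0 := sq_add_self_add_one_eq_zero_of_ne_one
    (pow_eq_one_of_bordered hbordered3)
    (ne_one_of_bordered_ne_one three_ne_zero hbordered3 hbordered1)
  obtain ⟨v, hBE⟩ := exists_isConj_bordered u (isConj_eisensteinMatrix hB)
  obtain ⟨e, he, hvE⟩ := exists_isConj_bordered_eisensteinMatrix v
  have hconj := (hAB.trans hBE).trans hvE
  rw [← isConj_units_val_iff, ← isConj_units_val_iff]
  rcases he with rfl | he
  · exact .inl (genA₁_val ▸ hconj)
  · exact .inr (hconj.trans (isConj_bordered_genA₂ he))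

end Classification

namespace IsConjSubgroup

variable {H K L : Subgroup (GL (Fin 3) ℤ)}

lemma symm (h : IsConjSubgroup H K) : IsConjSubgroup K H := by
  obtain ⟨g, rfl⟩ := h
  exact ⟨g⁻¹, by rw [map_inv]; exact inv_smul_smul (MulAut.conj g) H⟩

lemma trans (hHK : IsConjSubgroup H K) (hKL : IsConjSubgroup K L) : IsConjSubgroup H L := by
  obtain ⟨g, rfl⟩ := hHK
  obtain ⟨g', rfl⟩ := hKL
  exact ⟨g' * g, by rw [map_mul]; exact mul_smul (MulAut.conj g') (MulAut.conj g) H⟩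

lemma zpowers_of_isConj {A B : GL (Fin 3) ℤ} (h : IsConj A B) :
    IsConjSubgroup (Subgroup.zpowers A) (Subgroup.zpowers B) := by
  obtain ⟨g, rfl⟩ := isConj_iff.mp h
  exact ⟨g, MonoidHom.map_zpowers _ A⟩

lemma exists_isConj_pow {A B : GL (Fin 3) ℤ} (hA : IsOfFinOrder A)
    (h : IsConjSubgroup (Subgroup.zpowers A) (Subgroup.zpowers B)) :
    ∃ k : ℕ, IsConj (A ^ k) B := by
  obtain ⟨g, hg⟩ := h
  obtain ⟨x, hx, hxB⟩ := hg.symm.le (Subgroup.mem_zpowers B)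
  obtain ⟨k, rfl⟩ := hA.mem_powers_iff_mem_zpowers.mpr hx
  exact ⟨k, isConj_iff.mpr ⟨g, hxB⟩⟩

end IsConjSubgroup

-- Modulo `3` both generators are unipotent, but only `genA₁` satisfies `(A - 1)² = 0`.
lemma not_isConjSubgroup_zpowers_genA₁_genA₂ :
    ¬ IsConjSubgroup (Subgroup.zpowers genA₁) (Subgroup.zpowers genA₂) := by
  intro h
  have hfin : IsOfFinOrder genA₁ := isOfFinOrder_iff_pow_eq_one.mpr ⟨3, by decide, by decide⟩
  obtain ⟨k, hk⟩ := IsConjSubgroup.exists_isConj_pow hfin h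
  let reduce : GL (Fin 3) ℤ →* Matrix (Fin 3) (Fin 3) (ZMod 3) :=
    (Int.castRingHom (ZMod 3)).mapMatrix.toMonoidHom.comp (Units.coeHom _)
  have hgenA₁ : (reduce genA₁ - 1) ^ 2 = 0 := by decide
  have hgenA₂ : (reduce genA₂ - 1) ^ 2 ≠ 0 := by decide
  have hconj : IsConj (reduce genA₁ ^ k) (reduce genA₂) :=
    map_pow reduce genA₁ k ▸ reduce.map_isConj hk
  exact hgenA₂ (sub_one_pow_eq_zero_of_isConj hconj (pow_sub_one_pow_eq_zero hgenA₁ k))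

lemma exists_zpowers_eq_of_card_eq_prime {G : Type*} [Group G] {p : ℕ} [Fact p.Prime]
    {H : Subgroup G} (hH : Nat.card H = p) :
    ∃ A : G, Subgroup.zpowers A = H ∧ A ^ p = 1 ∧ A ≠ 1 := by
  obtain ⟨A, rfl⟩ := H.isCyclic_iff_exists_zpowers_eq_top.mp (isCyclic_of_prime_card hH)
  rw [Nat.card_zpowers] at hH
  exact ⟨A, rfl, orderOf_eq_prime_iff.mp hH⟩

/-- Every subgroup of order 3 of `GL(3,ℤ)` is conjugate to exactly one of the two cyclic
subgroups `W₁ = ⟨A₁⟩` and `W₂ = ⟨A₂⟩`; moreover `W₁` and `W₂` are not conjugate. -/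
theorem subgroups_of_order_three_in_GL3Z :
    (∀ H : Subgroup (Matrix.GeneralLinearGroup (Fin 3) ℤ), Nat.card H = 3 →
      ((IsConjSubgroup H (Subgroup.zpowers genA₁) ∧
          ¬ IsConjSubgroup H (Subgroup.zpowers genA₂)) ∨
        (IsConjSubgroup H (Subgroup.zpowers genA₂) ∧
          ¬ IsConjSubgroup H (Subgroup.zpowers genA₁)))) ∧
    ¬ IsConjSubgroup (Subgroup.zpowers genA₁) (Subgroup.zpowers genA₂) := by
  have hnot := not_isConjSubgroup_zpowers_genA₁_genA₂
  refine ⟨fun H hH => ?_, hnot⟩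
  obtain ⟨A, rfl, h3, h1⟩ := exists_zpowers_eq_of_card_eq_prime hH
  rcases isConj_genA₁_or_isConj_genA₂ h3 h1 with hA | hA
  · have hconj := IsConjSubgroup.zpowers_of_isConj hA
    exact .inl ⟨hconj, fun h => hnot (hconj.symm.trans h)⟩
  · have hconj := IsConjSubgroup.zpowers_of_isConj hA
    exact .inr ⟨hconj, fun h => hnot (h.symm.trans hconj)⟩
end

section
/- Let a, b, c ∈ ℤ with a + b + c = 1, and suppose the three points P₁ = (a,b,c), P₂ = (b,c,a), P₃ = (c,a,b) in ℤ³ are pairwise distinct and the convex hull of {P₁,P₂,P₃} in ℝ³ contains no lattice points of ℤ³ other than P₁, P₂, P₃. Then {P₁,P₂,P₃} = {(1,0,0),(0,1,0),(0,0,1)}. -/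
/-- The cyclic permutations of the vector `(a, b, c)`: the vertices of the triangle under study. The
type of the entries is arbitrary, so that the same notion serves for `ℤ³` and `ℝ³`. -/
def cyclicPermutations {α : Type*} (a b c : α) : Set (Fin 3 → α) :=
  {![a, b, c], ![b, c, a], ![c, a, b]}

theorem cyclicPermutations_rotate {α : Type*} (a b c : α) :
    cyclicPermutations b c a = cyclicPermutations a b c := by
  rw [cyclicPermutations, cyclicPermutations, Set.insert_comm ![a, b, c],
    Set.pair_comm ![a, b, c]]

theorem cyclicPermutations_eq_of_mem {α : Type*} {a b c x y z : α}
    (h : ![x, y, z] ∈ cyclicPermutations a b c) :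
    cyclicPermutations x y z = cyclicPermutations a b c := by
  simp only [cyclicPermutations, Set.mem_insert_iff, Set.mem_singleton_iff, Matrix.vecCons_inj,
    and_true] at h
  rcases h with ⟨rfl, rfl, rfl⟩ | ⟨rfl, rfl, rfl⟩ | ⟨rfl, rfl, rfl⟩
  · rfl
  · exact cyclicPermutations_rotate z x y
  · exact (cyclicPermutations_rotate x y z).symm

theorem latticeEmbed₃_vec (a b c : ℤ) : latticeEmbed₃ ![a, b, c] = ![(a : ℝ), b, c] := by
  ext i
  fin_cases i <;> rfl

theorem mul_le_sq_of_add_add_eq_one {a b c : ℤ} (h : a + b + c = 1) : b * c ≤ a ^ 2 := by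
  obtain rfl | ha := eq_or_ne a 0
  · obtain rfl : c = 1 - b := by lia
    linear_combination Int.le_self_sq b
  · have four_mul_le : 4 * (b * c) ≤ (1 - a) ^ 2 := by
      rw [show 1 - a = b + c by lia, ← mul_assoc]
      exact four_mul_le_sq_add b c
    have factors_nonneg : 0 ≤ (3 * a - 1) * (a + 1) := by
      obtain ha | ha := ha.lt_or_gt
      · exact mul_nonneg_of_nonpos_of_nonpos (by lia) (by lia)
      · exact mul_nonneg (by lia) (by lia)
    have sq_le_four_mul_sq : (1 - a) ^ 2 ≤ 4 * a ^ 2 := by linear_combination factors_nonneg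
    exact le_of_mul_le_mul_left (four_mul_le.trans sq_le_four_mul_sq) four_pos

theorem sum_sq_sub_mul_pos_of_add_add_eq_one {a b c : ℤ} (h : a + b + c = 1) :
    0 < (a ^ 2 - b * c) + (b ^ 2 - c * a) + (c ^ 2 - a * b) := by
  have ha : b * c ≤ a ^ 2 := mul_le_sq_of_add_add_eq_one h
  have hb : c * a ≤ b ^ 2 := mul_le_sq_of_add_add_eq_one (by lia)
  have hc : a * b ≤ c ^ 2 := mul_le_sq_of_add_add_eq_one (by lia)
  have sum_eq : (a ^ 2 - b * c) + (b ^ 2 - c * a) + (c ^ 2 - a * b) =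
      1 - 3 * (a * b + b * c + c * a) := by
    linear_combination (a + b + c + 1) * h
  lia

theorem sum_sq_sub_mul_smul_cyclic {R : Type*} [CommRing R] (a b c : R) :
    (a ^ 2 - b * c) • ![a, b, c] + (b ^ 2 - c * a) • ![b, c, a] + (c ^ 2 - a * b) • ![c, a, b] =
      ((a + b + c) * ((a ^ 2 - b * c) + (b ^ 2 - c * a) + (c ^ 2 - a * b))) • ![1, 0, 0] := by
  ext i
  fin_cases i <;> simp <;> ring

theorem mem_convexHull_triple_of_smul_eq {𝕜 E : Type*} [Field 𝕜] [LinearOrder 𝕜]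
    [IsStrictOrderedRing 𝕜] [AddCommGroup E] [Module 𝕜 E] {x y z p : E} {u v w : 𝕜}
    (hu : 0 ≤ u) (hv : 0 ≤ v) (hw : 0 ≤ w) (hpos : 0 < u + v + w)
    (h : u • x + v • y + w • z = (u + v + w) • p) : p ∈ convexHull 𝕜 {x, y, z} := by
  have hmem : Finset.univ.centerMass ![u, v, w] ![x, y, z] ∈ convexHull 𝕜 {x, y, z} :=
    Finset.univ.centerMass_mem_convexHull (by simp [Fin.forall_fin_succ, hu, hv, hw])
      (by simpa [Fin.sum_univ_three] using hpos) (by simp [Fin.forall_fin_succ])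
  simpa [Finset.centerMass, Fin.sum_univ_three, h, inv_smul_smul₀ hpos.ne'] using hmem

theorem unit_vec_mem_convexHull_cyclicPermutations {a b c : ℤ} (h : a + b + c = 1) :
    ![1, 0, 0] ∈ convexHull ℝ (cyclicPermutations (a : ℝ) b c) := by
  have sum_eq_one : (a : ℝ) + b + c = 1 := mod_cast h
  have ha : (b * c : ℝ) ≤ a ^ 2 := mod_cast mul_le_sq_of_add_add_eq_one h
  have hb : (c * a : ℝ) ≤ b ^ 2 := mod_cast mul_le_sq_of_add_add_eq_one (by lia)
  have hc : (a * b : ℝ) ≤ c ^ 2 := mod_cast mul_le_sq_of_add_add_eq_one (by lia)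
  have hpos : (0 : ℝ) < (a ^ 2 - b * c) + (b ^ 2 - c * a) + (c ^ 2 - a * b) :=
    mod_cast sum_sq_sub_mul_pos_of_add_add_eq_one h
  refine mem_convexHull_triple_of_smul_eq (sub_nonneg.2 ha) (sub_nonneg.2 hb) (sub_nonneg.2 hc)
    hpos ?_
  rw [sum_sq_sub_mul_smul_cyclic, sum_eq_one, one_mul]

/-- If the three pairwise distinct cyclic permutations `(a,b,c)`, `(b,c,a)`, `(c,a,b)` of a
lattice point with `a + b + c = 1` span a triangle containing no other lattice points, then
they are the standard basis vectors `(1,0,0)`, `(0,1,0)`, `(0,0,1)`. -/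
theorem cyclic_lattice_triangle_is_standard (a b c : ℤ) (habc : a + b + c = 1)
    (P₁ P₂ P₃ : Fin 3 → ℤ)
    (hP₁ : P₁ = ![a, b, c]) (hP₂ : P₂ = ![b, c, a]) (hP₃ : P₃ = ![c, a, b])
    (h12 : P₁ ≠ P₂) (h13 : P₁ ≠ P₃) (h23 : P₂ ≠ P₃)
    (hlat : ∀ x : Fin 3 → ℤ,
      latticeEmbed₃ x ∈ convexHull ℝ {latticeEmbed₃ P₁, latticeEmbed₃ P₂, latticeEmbed₃ P₃} →
        x = P₁ ∨ x = P₂ ∨ x = P₃) :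
    ({P₁, P₂, P₃} : Set (Fin 3 → ℤ)) = {![1,0,0], ![0,1,0], ![0,0,1]} := by
  subst hP₁ hP₂ hP₃
  have unit_vec_mem_hull : latticeEmbed₃ ![1, 0, 0] ∈ convexHull ℝ
      {latticeEmbed₃ ![a, b, c], latticeEmbed₃ ![b, c, a], latticeEmbed₃ ![c, a, b]} := by
    simpa only [latticeEmbed₃_vec, cyclicPermutations, Int.cast_one, Int.cast_zero] using
      unit_vec_mem_convexHull_cyclicPermutations habc
  have unit_vec_mem_vertices : ![1, 0, 0] ∈ cyclicPermutations a b c := hlat _ unit_vec_mem_hull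
  calc cyclicPermutations a b c
    _ = cyclicPermutations 1 0 0 := (cyclicPermutations_eq_of_mem unit_vec_mem_vertices).symm
    _ = {![1, 0, 0], ![0, 1, 0], ![0, 0, 1]} := by
      rw [cyclicPermutations, Set.pair_comm]
end

section
/- Let S = {(1,0,0),(−1,0,0),(0,0,1),(0,0,−1),(1,1,1),(−1,−1,−1),(0,1,0),(0,−1,0)} ⊂ ℤ³ (a combinatorial cube). Then the origin lies in the interior of P := convexHull ℝ S, every point of S is an extreme point of P, and P ∩ ℤ³ = S ∪ {0}; i.e., S defines a terminal Fano polytope. -/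
open Set

section SignVectors

/-- The vectors with all entries `±1`: the vertices of the cube `[-1, 1]^ι`. -/
def signVectors (ι R : Type*) [Ring R] : Set (ι → R) :=
  univ.pi fun _ => {-1, 1}

variable {ι : Type*}

lemma mem_signVectors {R : Type*} [Ring R] {u : ι → R} :
    u ∈ signVectors ι R ↔ ∀ i, u i = -1 ∨ u i = 1 := by
  simp [signVectors]

lemma convexHull_signVectors [Finite ι] :
    convexHull ℝ (signVectors ι ℝ) = Icc (-1) 1 := by
  simp only [signVectors, convexHull_pi, convexHull_pair,
    segment_eq_Icc (neg_le_self zero_le_one), ← pi_univ_Icc, Pi.neg_apply, Pi.one_apply]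

lemma extremePoints_Icc_neg_one_one :
    extremePoints ℝ (Icc (-1) 1 : Set (ι → ℝ)) = signVectors ι ℝ := by
  simp only [signVectors, ← pi_univ_Icc, extremePoints_pi, Pi.neg_apply, Pi.one_apply,
    extremePoints_Icc (neg_le_self zero_le_one)]

lemma modEq_two_of_mem_signVectors {u : ι → ℤ} (hu : u ∈ signVectors ι ℤ) (i j : ι) :
    u i ≡ u j [ZMOD 2] := by
  rw [mem_signVectors] at hu
  rcases hu i with hi | hi <;> rcases hu j with hj | hj <;> rw [hi, hj] <;> decide

lemma mem_Icc_iff_mem_signVectors_or_eq_zero {u : ι → ℤ} (hu : ∀ i j, u i ≡ u j [ZMOD 2]) :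
    u ∈ Icc (-1) 1 ↔ u ∈ signVectors ι ℤ ∨ u = 0 := by
  simp only [mem_signVectors, mem_Icc, Pi.le_def, funext_iff, Pi.neg_apply, Pi.one_apply,
    Pi.zero_apply, ← forall_and]
  refine ⟨fun h => ?_, ?_⟩
  · by_cases hodd : ∃ j, u j % 2 = 1
    · obtain ⟨j, hj⟩ := hodd
      refine .inl fun i => ?_
      have hi : u i % 2 = 1 := (hu i j).eq.trans hj
      have := h i
      omega
    · push Not at hodd
      refine .inr fun i => ?_
      have := h i
      have := hodd i
      omega
  · rintro (h | h) i <;> have := h i <;> omega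

variable {E : Type*} [AddCommGroup E] [Module ℝ E]

lemma convexHull_preimage_signVectors [Finite ι] (L : E ≃ₗ[ℝ] ι → ℝ) :
    convexHull ℝ (L ⁻¹' signVectors ι ℝ) = L ⁻¹' Icc (-1) 1 := by
  simp only [← LinearEquiv.image_symm_eq_preimage, ← convexHull_signVectors]
  exact (L.symm.toLinearMap.image_convexHull _).symm

lemma extremePoints_preimage_Icc (L : E ≃ₗ[ℝ] ι → ℝ) :
    extremePoints ℝ (L ⁻¹' Icc (-1) 1) = L ⁻¹' signVectors ι ℝ := by
  simp only [← LinearEquiv.image_symm_eq_preimage, ← extremePoints_Icc_neg_one_one,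
    image_extremePoints]

lemma zero_mem_interior_preimage_Icc [Finite ι] [TopologicalSpace E] {L : E →ₗ[ℝ] ι → ℝ}
    (hL : Continuous L) : (0 : E) ∈ interior (L ⁻¹' Icc (-1) 1) := by
  rw [mem_interior_iff_mem_nhds]
  refine hL.continuousAt.preimage_mem_nhds ?_
  rw [map_zero]
  exact pi_Icc_mem_nhds (fun _ => neg_one_lt_zero) (fun _ => zero_lt_one)

end SignVectors

section FacetForms

/-- The three linear forms `x₀ + x₁ + x₂ - 2 xᵢ`, which take the values `1` and `-1` on the
six facets of the polytope. -/
def facetForms (R : Type*) [CommRing R] : (Fin 3 → R) →ₗ[R] (Fin 3 → R) :=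
  LinearMap.pi fun i => ∑ j, LinearMap.proj j - (2 : R) • LinearMap.proj i

variable {R : Type*} [CommRing R]

lemma facetForms_apply (x : Fin 3 → R) (i : Fin 3) :
    facetForms R x i = x 0 + x 1 + x 2 - 2 * x i := by
  simp [facetForms, Fin.sum_univ_three]

lemma two_mul_eq_sum_facetForms_sub (x : Fin 3 → R) (i : Fin 3) :
    2 * x i = ∑ j, facetForms R x j - facetForms R x i := by
  simp only [Fin.sum_univ_three, facetForms_apply]
  ring

lemma facetForms_injective [NoZeroDivisors R] [NeZero (2 : R)] :
    Function.Injective (facetForms R) := by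
  intro x y hxy
  ext i
  refine mul_left_cancel₀ (two_ne_zero (α := R)) ?_
  rw [two_mul_eq_sum_facetForms_sub x, two_mul_eq_sum_facetForms_sub y, hxy]

lemma mem_range_facetForms {u : Fin 3 → ℤ} :
    u ∈ range (facetForms ℤ) ↔ ∀ i j, u i ≡ u j [ZMOD 2] := by
  simp only [Int.ModEq]
  constructor
  · rintro ⟨x, rfl⟩ i j
    simp only [facetForms_apply]
    omega
  · intro hu
    refine ⟨fun i => (u 0 + u 1 + u 2 - u i) / 2, funext ?_⟩
    have h₀₁ := hu 0 1
    have h₀₂ := hu 0 2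
    simp only [facetForms_apply, Fin.forall_fin_succ, Fin.succ_zero_eq_one, Fin.succ_one_eq_two,
      IsEmpty.forall_iff, and_true]
    omega

lemma facetForms_preimage_signVectors :
    facetForms ℤ ⁻¹' signVectors (Fin 3) ℤ =
      {![1,0,0], ![-1,0,0], ![0,0,1], ![0,0,-1], ![1,1,1], ![-1,-1,-1], ![0,1,0], ![0,-1,0]} := by
  ext x
  simp only [mem_preimage, mem_signVectors, mem_insert_iff, mem_singleton_iff]
  constructor
  · intro h
    have hx : ∀ i, x i = (∑ j, facetForms ℤ x j - facetForms ℤ x i) / 2 := fun i => by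
      rw [← two_mul_eq_sum_facetForms_sub]
      omega
    rw [funext hx]
    simp only [Fin.sum_univ_three]
    rcases h 0 with h₀ | h₀ <;> rcases h 1 with h₁ | h₁ <;> rcases h 2 with h₂ | h₂ <;>
      simp [h₀, h₁, h₂, funext_iff, Fin.forall_fin_succ]
  · rintro (rfl | rfl | rfl | rfl | rfl | rfl | rfl | rfl) <;>
      simp [facetForms_apply, Fin.forall_fin_succ]

/-- `facetForms ℝ` as a linear change of coordinates. -/
noncomputable def facetEquiv : (Fin 3 → ℝ) ≃ₗ[ℝ] (Fin 3 → ℝ) :=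
  LinearEquiv.ofInjectiveEndo (facetForms ℝ) facetForms_injective

lemma coe_facetEquiv : ⇑facetEquiv = facetForms ℝ := rfl

end FacetForms

section Lattice

lemma latticeEmbed₃_mem_Icc {u : Fin 3 → ℤ} : latticeEmbed₃ u ∈ Icc (-1) 1 ↔ u ∈ Icc (-1) 1 := by
  simp only [mem_Icc, Pi.le_def, latticeEmbed₃, Pi.neg_apply, Pi.one_apply]
  norm_cast

lemma latticeEmbed₃_image_signVectors :
    latticeEmbed₃ '' signVectors (Fin 3) ℤ = signVectors (Fin 3) ℝ := by
  change Pi.map (fun _ => Int.cast) '' _ = _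
  simp [signVectors, piMap_image_univ_pi, image_pair]

lemma facetForms_latticeEmbed₃ (x : Fin 3 → ℤ) :
    facetForms ℝ (latticeEmbed₃ x) = latticeEmbed₃ (facetForms ℤ x) := by
  ext i
  simp [facetForms_apply, latticeEmbed₃]

lemma latticeEmbed₃_image_preimage_signVectors :
    latticeEmbed₃ '' (facetForms ℤ ⁻¹' signVectors (Fin 3) ℤ) =
      facetEquiv ⁻¹' signVectors (Fin 3) ℝ := by
  rw [coe_facetEquiv, ← latticeEmbed₃_image_signVectors]
  apply Subset.antisymm
  · rintro _ ⟨x, hx, rfl⟩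
    exact ⟨facetForms ℤ x, hx, (facetForms_latticeEmbed₃ x).symm⟩
  · rintro x ⟨u, hu, hux⟩
    obtain ⟨y, rfl⟩ := mem_range_facetForms.2 (modEq_two_of_mem_signVectors hu)
    exact ⟨y, hu, facetForms_injective ((facetForms_latticeEmbed₃ y).trans hux)⟩

lemma latticeEmbed₃_mem_preimage_Icc {x : Fin 3 → ℤ} :
    latticeEmbed₃ x ∈ facetEquiv ⁻¹' Icc (-1) 1 ↔
      x ∈ facetForms ℤ ⁻¹' signVectors (Fin 3) ℤ ∨ x = 0 := by
  rw [mem_preimage, coe_facetEquiv, facetForms_latticeEmbed₃, latticeEmbed₃_mem_Icc,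
    mem_Icc_iff_mem_signVectors_or_eq_zero (mem_range_facetForms.1 ⟨x, rfl⟩), mem_preimage,
    map_eq_zero_iff _ facetForms_injective]

end Lattice

/-- The combinatorial cube with the given eight vertices is a terminal Fano polytope (it corresponds to the intersection of two quadrics in `ℙ⁵`). -/
theorem cube_is_terminal_fano (S : Set (Fin 3 → ℤ))
    (hS : S = {![1,0,0], ![-1,0,0], ![0,0,1], ![0,0,-1], ![1,1,1], ![-1,-1,-1], ![0,1,0], ![0,-1,0]})
    (P : Set (Fin 3 → ℝ)) (hP : P = convexHull ℝ (latticeEmbed₃ '' S)) :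
    (0 : Fin 3 → ℝ) ∈ interior P ∧
    (∀ s ∈ S, latticeEmbed₃ s ∈ Set.extremePoints ℝ P) ∧
    (∀ x : Fin 3 → ℤ, latticeEmbed₃ x ∈ P ↔ x ∈ S ∨ x = 0) := by
  rw [← facetForms_preimage_signVectors] at hS
  have hvertices : latticeEmbed₃ '' S = facetEquiv ⁻¹' signVectors (Fin 3) ℝ := by
    rw [hS, latticeEmbed₃_image_preimage_signVectors]
  have hcube : P = facetEquiv ⁻¹' Icc (-1) 1 := by
    rw [hP, hvertices, convexHull_preimage_signVectors]
  rw [hcube]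
  refine ⟨?_, fun s hs => ?_, fun x => ?_⟩
  · exact zero_mem_interior_preimage_Icc (facetForms ℝ).continuous_of_finiteDimensional
  · rw [extremePoints_preimage_Icc, ← hvertices]
    exact mem_image_of_mem _ hs
  · rw [hS, latticeEmbed₃_mem_preimage_Icc]
end

section
/- Let S = {(1,0,0),(0,1,0),(1,1,1),(−1,−1,0),(0,0,−1)} ⊂ ℤ³ (a pyramid over a quadrangle). Then the origin lies in the interior of P := convexHull ℝ S, every point of S is an extreme point of P, and P ∩ ℤ³ = S ∪ {0}; i.e., S defines a terminal Fano polytope. -/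
/-! The pyramid is cut out by five facet inequalities `u · p ≤ 1` with integral `u`, so the origin,
where they are all strict, is an interior point, and lattice points are the integer solutions of
an explicit system. That the inequalities suffice is seen by writing a solution as a convex
combination of the vertices: the plane through the apex `(-1,-1,0)` and the diagonal of the
quadrangle joining `(1,0,0)` and `(0,1,0)` cuts the pyramid into two simplices, on each of which
the barycentric coordinates are affine. Finally, each vertex is the unique maximiser, among the
vertices, of some linear functional. -/

open Matrix Set

section ExtremePoints

variable {𝕜 E : Type*}

theorem convex_insert_setOf_lt [Semiring 𝕜] [PartialOrder 𝕜] [IsStrictOrderedRing 𝕜]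
    [AddCommMonoid E] [Module 𝕜 E] (ℓ : E →ₗ[𝕜] 𝕜) (x : E) :
    Convex 𝕜 (insert x {y | ℓ y < ℓ x}) := by
  rw [convex_iff_pairwise_pos]
  intro y hy z hz hyz a b ha hb hab
  have le_of_mem : ∀ w ∈ insert x {y | ℓ y < ℓ x}, ℓ w ≤ ℓ x := by
    rintro w (rfl | hw)
    exacts [le_rfl, hw.le]
  have one_lt : ℓ y < ℓ x ∨ ℓ z < ℓ x := by
    rcases hy with rfl | hy
    · exact .inr (hz.resolve_left hyz.symm)
    · exact .inl hy
  right
  calc ℓ (a • y + b • z) = a * ℓ y + b * ℓ z := by simp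
    _ < a * ℓ x + b * ℓ x := by
      rcases one_lt with hlt | hlt
      · exact add_lt_add_of_lt_of_le (mul_lt_mul_of_pos_left hlt ha)
          (mul_le_mul_of_nonneg_left (le_of_mem z hz) hb.le)
      · exact add_lt_add_of_le_of_lt (mul_le_mul_of_nonneg_left (le_of_mem y hy) ha.le)
          (mul_lt_mul_of_pos_left hlt hb)
    _ = ℓ x := by rw [← add_mul, hab, one_mul]

theorem mem_extremePoints_convexHull_of_forall_lt [Ring 𝕜] [LinearOrder 𝕜]
    [IsStrictOrderedRing 𝕜] [DenselyOrdered 𝕜] [AddCommGroup E] [Module 𝕜 E]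
    [Module.IsTorsionFree 𝕜 E] {s : Set E} {x : E} (ℓ : E →ₗ[𝕜] 𝕜)
    (hx : x ∈ s) (hlt : ∀ y ∈ s, y ≠ x → ℓ y < ℓ x) :
    x ∈ (convexHull 𝕜 s).extremePoints 𝕜 := by
  have hconv := convex_insert_setOf_lt ℓ x
  have hull_subset : convexHull 𝕜 s ⊆ insert x {y | ℓ y < ℓ x} :=
    convexHull_min (fun y hy ↦ or_iff_not_imp_left.2 (hlt y hy)) hconv
  refine inter_extremePoints_subset_extremePoints_of_subset hull_subset
    ⟨subset_convexHull 𝕜 s hx, hconv.mem_extremePoints_iff_convex_sdiff.2 ⟨mem_insert x _, ?_⟩⟩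
  rw [insert_sdiff_self_of_notMem (by simp)]
  exact convex_halfSpace_lt ℓ.isLinear (ℓ x)

end ExtremePoints

section Polyhedron

variable {m n R : Type*} [Fintype n]

/-- The polyhedron `{p | A p ≤ b}`, presented by its defining inequalities: the rows of `A` are
the outer normals of the bounding half-spaces. -/
def polyhedron [NonUnitalNonAssocSemiring R] [LE R] (A : Matrix m n R) (b : m → R) :
    Set (n → R) := {p | A *ᵥ p ≤ b}

theorem convex_polyhedron [CommSemiring R] [PartialOrder R] [IsOrderedRing R] (A : Matrix m n R)
    (b : m → R) : Convex R (polyhedron A b) :=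
  (convex_Iic b).linear_preimage A.mulVecLin

theorem mem_interior_polyhedron [Finite m] [NonUnitalNonAssocSemiring R] [LinearOrder R]
    [TopologicalSpace R] [OrderTopology R] [IsTopologicalSemiring R] {A : Matrix m n R}
    {b : m → R} {p : n → R} (h : ∀ i, (A *ᵥ p) i < b i) : p ∈ interior (polyhedron A b) := by
  have hcont : Continuous fun q : n → R ↦ A *ᵥ q := continuous_const.matrix_mulVec continuous_id
  exact mem_interior_iff_mem_nhds.2 (hcont.continuousAt.preimage_mem_nhds (pi_Iic_mem_nhds h))

end Polyhedron

section Lattice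

theorem latticeEmbed₃_dotProduct (u v : Fin 3 → ℤ) :
    latticeEmbed₃ u ⬝ᵥ latticeEmbed₃ v = ((u ⬝ᵥ v : ℤ) : ℝ) :=
  ((Int.castRingHom ℝ).map_dotProduct u v).symm

theorem latticeEmbed₃_mem_polyhedron_iff {m : Type*} {A : Matrix m (Fin 3) ℤ} {b : m → ℤ}
    {x : Fin 3 → ℤ} :
    latticeEmbed₃ x ∈ polyhedron (A.map (Int.cast : ℤ → ℝ)) (fun i ↦ (b i : ℝ)) ↔ A *ᵥ x ≤ b :=
  forall_congr' fun i ↦ by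
    rw [← Int.cast_le (R := ℝ)]
    exact iff_of_eq (congrArg (· ≤ _) (latticeEmbed₃_dotProduct (A i) x))

theorem latticeEmbed₃_mem_extremePoints_of_forall_lt {s : Set (Fin 3 → ℤ)} {x : Fin 3 → ℤ}
    (u : Fin 3 → ℤ) (hx : x ∈ s) (hlt : ∀ y ∈ s, y ≠ x → u ⬝ᵥ y < u ⬝ᵥ x) :
    latticeEmbed₃ x ∈ (convexHull ℝ (latticeEmbed₃ '' s)).extremePoints ℝ := by
  refine mem_extremePoints_convexHull_of_forall_lt
    (dotProductBilin ℝ ℝ (latticeEmbed₃ u)) (mem_image_of_mem _ hx) ?_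
  rintro _ ⟨y, hy, rfl⟩ hne
  simpa only [dotProductBilin_apply_apply, latticeEmbed₃_dotProduct, Int.cast_lt] using
    hlt y hy (ne_of_apply_ne latticeEmbed₃ hne)

end Lattice

section Pyramid

/-- The vertices of the pyramid; the apex is number `3`. -/
def pyramidVertices : Fin 5 → Fin 3 → ℤ :=
  ![![1, 0, 0], ![0, 1, 0], ![1, 1, 1], ![-1, -1, 0], ![0, 0, -1]]

/-- The outer normals `u` of the facets `u · p = 1` of the pyramid, as the rows of a matrix; row
`0` belongs to the quadrangle. -/
def pyramidNormals : Matrix (Fin 5) (Fin 3) ℤ :=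
  !![1, 1, -1; 1, -2, 2; -2, 1, 2; -2, 1, -1; 1, -2, -1]

/-- Functionals exposing the vertices: among the vertices, the `i`-th functional is maximal at the
`i`-th one only. -/
def pyramidExposing : Fin 5 → Fin 3 → ℤ :=
  ![![1, -1, 0], ![-1, 1, 0], ![0, 0, 1], ![-1, -1, 0], ![0, 0, -1]]

theorem pyramidExposing_dotProduct_lt : ∀ i j, j ≠ i →
    pyramidExposing i ⬝ᵥ pyramidVertices j < pyramidExposing i ⬝ᵥ pyramidVertices i := by
  decide

theorem pyramidNormals_mulVec_pyramidVertices_le_one :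
    ∀ i, pyramidNormals *ᵥ pyramidVertices i ≤ 1 := by
  simp only [Pi.le_def]
  decide

theorem map_pyramidNormals_mulVec_le_one_iff {R : Type*} [NonAssocRing R] [LE R]
    {p : Fin 3 → R} :
    pyramidNormals.map (Int.cast : ℤ → R) *ᵥ p ≤ 1 ↔
      p 0 + p 1 - p 2 ≤ 1 ∧ p 0 - 2 * p 1 + 2 * p 2 ≤ 1 ∧ -2 * p 0 + p 1 + 2 * p 2 ≤ 1 ∧
        -2 * p 0 + p 1 - p 2 ≤ 1 ∧ p 0 - 2 * p 1 - p 2 ≤ 1 := by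
  simp [pyramidNormals, Pi.le_def, Fin.forall_fin_succ, mulVec, dotProduct, Fin.sum_univ_succ,
    sub_eq_add_neg, add_assoc]

theorem mem_Icc_of_pyramidNormals_mulVec_le_one {x : Fin 3 → ℤ} (hx : pyramidNormals *ᵥ x ≤ 1) :
    x ∈ Finset.Icc (-1) 1 := by
  obtain ⟨h₀, h₁, h₂, h₃, h₄⟩ := map_pyramidNormals_mulVec_le_one_iff.1 hx
  simp only [Finset.mem_Icc, Pi.le_def, Pi.neg_apply, Pi.one_apply, ← forall_and]
  intro k
  fin_cases k <;> simp only [Fin.reduceFinMk, Fin.zero_eta, Fin.mk_one] <;> omega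

theorem mem_range_pyramidVertices_or_eq_zero_of_mem_Icc :
    ∀ x ∈ Finset.Icc (-1 : Fin 3 → ℤ) 1,
      (∀ i, (pyramidNormals *ᵥ x) i ≤ 1) → (∃ i, pyramidVertices i = x) ∨ x = 0 := by
  decide

theorem pyramidNormals_mulVec_le_one_iff {x : Fin 3 → ℤ} :
    pyramidNormals *ᵥ x ≤ 1 ↔ x ∈ range pyramidVertices ∨ x = 0 := by
  constructor
  · intro hx
    exact mem_range_pyramidVertices_or_eq_zero_of_mem_Icc x
      (mem_Icc_of_pyramidNormals_mulVec_le_one hx) hx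
  · rintro (⟨i, rfl⟩ | rfl)
    · exact pyramidNormals_mulVec_pyramidVertices_le_one i
    · simp

theorem latticeEmbed₃_mem_polyhedron_pyramidNormals_iff {x : Fin 3 → ℤ} :
    latticeEmbed₃ x ∈ polyhedron (pyramidNormals.map (Int.cast : ℤ → ℝ)) 1 ↔
      x ∈ range pyramidVertices ∨ x = 0 := by
  rw [← pyramidNormals_mulVec_le_one_iff, ← latticeEmbed₃_mem_polyhedron_iff]
  simp [Pi.one_def]

theorem polyhedron_pyramidNormals_subset_convexHull :
    polyhedron (pyramidNormals.map (Int.cast : ℤ → ℝ)) 1 ⊆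
      convexHull ℝ (latticeEmbed₃ '' range pyramidVertices) := by
  intro p hp
  obtain ⟨h₀, h₁, h₂, h₃, h₄⟩ := map_pyramidNormals_mulVec_le_one_iff.1 hp
  -- `(1,0,0) + (0,1,0) = (1,1,1) + (0,0,-1)` leaves one free parameter `t` in the weights.
  obtain ⟨t, ht, htop, hleft, hright⟩ : ∃ t : ℝ, 0 ≤ t ∧ 0 ≤ p 2 + t ∧
      3 * t ≤ 1 + 2 * p 0 - p 1 - 2 * p 2 ∧ 3 * t ≤ 1 - p 0 + 2 * p 1 - 2 * p 2 := by
    rcases le_total 0 (p 2) with hz | hz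
    · exact ⟨0, by grind⟩
    · exact ⟨-p 2, by grind⟩
  let w : Fin 5 → ℝ := ![(1 + 2 * p 0 - p 1 - 2 * p 2) / 3 - t,
    (1 - p 0 + 2 * p 1 - 2 * p 2) / 3 - t, p 2 + t, (1 - p 0 - p 1 + p 2) / 3, t]
  have w_nonneg (i : Fin 5) : 0 ≤ w i := by
    fin_cases i <;> simp only [w, Fin.reduceFinMk, cons_val] <;> linarith
  have sum_w : ∑ i, w i = 1 := by
    simp only [w, Fin.sum_univ_five, cons_val]
    ring
  refine mem_convexHull_of_exists_fintype w (fun i ↦ latticeEmbed₃ (pyramidVertices i)) w_nonneg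
    sum_w (fun i ↦ ⟨_, mem_range_self i, rfl⟩) ?_
  ext k
  simp only [Fin.sum_univ_five, Pi.add_apply, Pi.smul_apply, smul_eq_mul, latticeEmbed₃, w,
    pyramidVertices, cons_val]
  fin_cases k <;> simp only [Fin.reduceFinMk, Fin.zero_eta, Fin.mk_one, cons_val] <;>
    push_cast <;> ring

theorem convexHull_pyramidVertices :
    convexHull ℝ (latticeEmbed₃ '' range pyramidVertices) =
      polyhedron (pyramidNormals.map (Int.cast : ℤ → ℝ)) 1 := by
  refine Subset.antisymm ?_ polyhedron_pyramidNormals_subset_convexHull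
  refine convexHull_min ?_ (convex_polyhedron (pyramidNormals.map (Int.cast : ℤ → ℝ)) 1)
  rintro _ ⟨_, ⟨i, rfl⟩, rfl⟩
  exact latticeEmbed₃_mem_polyhedron_pyramidNormals_iff.2 (.inl (mem_range_self i))

theorem pyramidVertices_mem_extremePoints (i : Fin 5) :
    latticeEmbed₃ (pyramidVertices i) ∈
      (convexHull ℝ (latticeEmbed₃ '' range pyramidVertices)).extremePoints ℝ := by
  refine latticeEmbed₃_mem_extremePoints_of_forall_lt (pyramidExposing i) (mem_range_self i) ?_
  rintro _ ⟨j, rfl⟩ hne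
  exact pyramidExposing_dotProduct_lt i j (ne_of_apply_ne pyramidVertices hne)

theorem range_pyramidVertices :
    range pyramidVertices = {![1,0,0], ![0,1,0], ![1,1,1], ![-1,-1,0], ![0,0,-1]} := by
  ext x
  simp only [pyramidVertices, mem_range, Fin.exists_fin_succ]
  simp [eq_comm]

end Pyramid

/-- The pyramid over a quadrangle with the given five vertices is a terminal Fano polytope (it corresponds to a quadratic cone `Q ⊂ ℙ⁴`). -/
theorem pyramid_is_terminal_fano (S : Set (Fin 3 → ℤ))
    (hS : S = {![1,0,0], ![0,1,0], ![1,1,1], ![-1,-1,0], ![0,0,-1]})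
    (P : Set (Fin 3 → ℝ)) (hP : P = convexHull ℝ (latticeEmbed₃ '' S)) :
    (0 : Fin 3 → ℝ) ∈ interior P ∧
    (∀ s ∈ S, latticeEmbed₃ s ∈ Set.extremePoints ℝ P) ∧
    (∀ x : Fin 3 → ℤ, latticeEmbed₃ x ∈ P ↔ x ∈ S ∨ x = 0) := by
  obtain rfl : S = range pyramidVertices := hS.trans range_pyramidVertices.symm
  subst hP
  refine ⟨?_, forall_mem_range.2 pyramidVertices_mem_extremePoints, fun x ↦ ?_⟩
  · rw [convexHull_pyramidVertices]
    exact mem_interior_polyhedron (by simp)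
  · rw [convexHull_pyramidVertices, latticeEmbed₃_mem_polyhedron_pyramidNormals_iff]
end
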